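/- Let 1<q<∞ with conjugate exponent q' (1/q+1/q'=1), let ω be a radial weight on [0,1) with ω∈𝒟 and ω̂(r)>0 for all r∈[0,1), extended to 𝔹 by ω(z)=ω(|z|), and let B^ω be the reproducing kernel of A²_ω. Define h(z)=ω̂(|z|)^{−1/(qq')} for z∈𝔹. Then there exists a constant C>0 such that ∫_𝔹 |B^ω_z(ξ)| h(ξ)^{q'} ω(ξ) dV(ξ) ≤ C·h(z)^{q'} for every z∈𝔹. -/

import Mathlib

/-!
Write `a = 1 / q`, so that `h ^ q' = ω̂ ^ (-a)`, and `⟨ξ, z⟩ = inner ℂ z ξ`.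

*Expansion of the kernel.* Since `ω` is radial, `B z ξ = ∑ k, cf k * ⟨ξ, z⟩ ^ k` with `cf k` a
constant multiple of `(k + n - 1)! / k! / ω_{2k+2n-1}`, where `ω_N = mom ω N` is the moment
`∫ r ^ N ω(r) dr` (`kernel_hp`, `kernel_hasSum`). The coefficient is found by comparing, in polar
coordinates, the reproducing formula of `ω` with the Gaussian one (`gauss_hp`).

*Dyadic blocks.* The power series is cut by a piecewise linear partition of unity `chi` into
blocks with frequencies of order `2 ^ j`. The upper doubling condition makes the moments doubling
(`mom_double`), so the increasing coefficients `cf` vary slowly (`cf_diff`), and Parseval applied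
to the block and to its product with `1 - e^{iθ}` bounds its `L¹` norm over the circles
`θ ↦ e^{iθ} ξ` by a multiple of `cf (16 * 2 ^ j) * |⟨ξ, z⟩| ^ (2 * (2 ^ j - 1))` (`block_L1`,
`block_bound`). No logarithm is lost, because the truncation is not sharp.

*Integration.* The even powers of `|⟨ξ, z⟩|` integrate explicitly over spheres (`inner_moment`),
and the remaining radial integral is handled by the layer-cake estimate
`∫ r ^ N ω̂ ^ (-a) ω ≲ ω_N ^ (1 - a)` (`tail_power`). Thus the `j`-th block contributes at most a
multiple of `‖z‖ ^ (2 * (2 ^ j - 1)) * ω_N ^ (-a)`, with `N = 2 * (2 ^ j - 1) + 2 * n - 1`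
(`block_int`), and `ω_N ≳ ω̂(1 - 2^{-j-1})` (`mom_lower`).

*Summation.* Let `1 - 2^{-J} ≤ ‖z‖ < 1 - 2^{-J-1}`. For `j` below `J` the lower condition `DCheck`
makes `ω̂(1 - 2^{-j}) ^ (-a)` grow geometrically, and beyond `J` the factor `‖z‖ ^ (2 ^ j)` beats
the growth allowed by `DHat`; the whole sum is comparable to `ω̂(1 - 2^{-J}) ^ (-a)`, hence at most
a multiple of `ω̂(‖z‖) ^ (-a)` (`dyadic_sum`, `weight_sum`).
-/

open MeasureTheory Metric Filter

noncomputable section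

/-- A weight on `[0,1)`: a non-negative, measurable, integrable function. -/
def IsWeight (ω : ℝ → ℝ) : Prop :=
  (∀ r ∈ Set.Ico (0:ℝ) 1, 0 ≤ ω r) ∧ Measurable ω ∧ IntegrableOn ω (Set.Ico 0 1)

/-- `ω̂(r) = ∫_r^1 ω(t) dt`. -/
def wh (ω : ℝ → ℝ) (r : ℝ) : ℝ := ∫ t in Set.Ioo r 1, ω t

/-- The class `Dhat` of upper doubling weights. -/
def DHat (ω : ℝ → ℝ) : Prop :=
  ∃ C : ℝ, 1 ≤ C ∧ ∀ r ∈ Set.Ico (0:ℝ) 1, wh ω r ≤ C * wh ω ((1 + r) / 2)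

/-- The class `Dcheck`: there exist `C, K > 1` with `ω̂(r) ≥ C·ω̂(1-(1-r)/K)`. -/
def DCheck (ω : ℝ → ℝ) : Prop :=
  ∃ C K : ℝ, 1 < C ∧ 1 < K ∧ ∀ r ∈ Set.Ico (0:ℝ) 1,
    C * wh ω (1 - (1 - r) / K) ≤ wh ω r

/-- `D = Dhat ∩ Dcheck`. -/
def DD (ω : ℝ → ℝ) : Prop := DHat ω ∧ DCheck ω

/-- `ℂⁿ`. -/
abbrev En (n : ℕ) := EuclideanSpace ℂ (Fin n)

instance (n : ℕ) : MeasurableSpace (En n) := borel _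
instance (n : ℕ) : BorelSpace (En n) := ⟨rfl⟩

/-- The normalized volume measure on `ℂⁿ`, giving the unit ball measure `1`. -/
def nV (n : ℕ) : Measure (En n) := (volume (ball (0 : En n) 1))⁻¹ • volume

/-- The open unit ball `the unit ball` of `ℂⁿ`. -/
def Bl (n : ℕ) : Set (En n) := ball 0 1

/-- Membership in the Bergman space `A^p_ω`: holomorphic on `the unit ball` with finite norm. -/
def InAp (n : ℕ) (p : ℝ) (ω : ℝ → ℝ) (f : En n → ℂ) : Prop :=
  DifferentiableOn ℂ f (Bl n) ∧
    IntegrableOn (fun z => ‖f z‖ ^ p * ω ‖z‖) (Bl n) (nV n)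

/-- The norm of `A^p_ω`. -/
def ApNorm (n : ℕ) (p : ℝ) (ω : ℝ → ℝ) (f : En n → ℂ) : ℝ :=
  (∫ z in Bl n, ‖f z‖ ^ p * ω ‖z‖ ∂(nV n)) ^ (1 / p)

/-- `B` is the reproducing kernel of `A²_ω`: each `B z` lies in `A²_ω` and
`f(z) = ⟨f, B z⟩_{A²_ω}` for all `f ∈ A²_ω` and `z ∈ the unit ball`. -/
def IsRepKernel (n : ℕ) (ω : ℝ → ℝ) (B : En n → En n → ℂ) : Prop :=
  (∀ z ∈ Bl n, InAp n 2 ω (B z)) ∧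
    ∀ f : En n → ℂ, InAp n 2 ω f → ∀ z ∈ Bl n,
      f z = ∫ ξ in Bl n, f ξ * (starRingEnd ℂ) (B z ξ) * (ω ‖ξ‖ : ℂ) ∂(nV n)

/-! ### Trigonometric polynomials with slowly varying coefficients -/

/-- The point `e^{iθ}` of the unit circle. -/
def ee (θ : ℝ) : ℂ := Complex.exp (θ * Complex.I)

lemma ee_continuous : Continuous ee := by unfold ee; fun_prop

lemma norm_ee (θ : ℝ) : ‖ee θ‖ = 1 := by simp [ee, Complex.norm_exp_ofReal_mul_I]

lemma ee_ne_zero (θ : ℝ) : ee θ ≠ 0 := Complex.exp_ne_zero _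

lemma ee_add (a b : ℝ) : ee (a + b) = ee a * ee b := by
  simp [ee, add_mul, Complex.exp_add]

lemma ee_periodic : Function.Periodic ee (2 * Real.pi) := by
  intro x
  rw [ee_add]
  simp [ee, Complex.exp_two_pi_mul_I]

lemma ee_mul_conj (θ : ℝ) : ee θ * (starRingEnd ℂ) (ee θ) = 1 := by
  rw [Complex.mul_conj, Complex.normSq_eq_norm_sq, norm_ee]; simp

lemma integral_ee_zpow (m : ℤ) (hm : m ≠ 0) : ∫ θ in (0:ℝ)..(2 * Real.pi), ee θ ^ m = 0 := by
  have h : ∀ θ : ℝ, ee θ ^ m = Complex.exp ((m * Complex.I) * θ) := by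
    intro θ
    rw [ee, ← Complex.exp_int_mul]; ring_nf
  simp_rw [h]
  rw [integral_exp_mul_complex (by simp [hm, Complex.I_ne_zero])]
  have : Complex.exp (m * Complex.I * ((2 * Real.pi : ℝ) : ℂ)) = 1 := by
    have := Complex.exp_int_mul_two_pi_mul_I m
    rw [← this]; push_cast; ring_nf
  rw [this]
  simp

lemma integral_ee_pow_mul_conj (k l : ℕ) :
    ∫ θ in (0:ℝ)..(2 * Real.pi), ee θ ^ k * (starRingEnd ℂ) (ee θ ^ l)
      = if k = l then (2 * Real.pi : ℂ) else 0 := by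
  have h : ∀ θ : ℝ, ee θ ^ k * (starRingEnd ℂ) (ee θ ^ l) = ee θ ^ ((k:ℤ) - l) := by
    intro θ
    have h1 : (starRingEnd ℂ) (ee θ) = (ee θ)⁻¹ := by
      exact eq_inv_of_mul_eq_one_right (ee_mul_conj θ)
    rw [map_pow, h1, zpow_sub₀ (ee_ne_zero θ), inv_pow]; rfl
  simp_rw [h]
  split_ifs with hkl
  · subst hkl; simp
  · exact integral_ee_zpow _ (by omega)

lemma parseval (M : ℕ) (b : ℕ → ℂ) :
    ∫ θ in (0:ℝ)..(2 * Real.pi), ‖∑ k ∈ Finset.range M, b k * ee θ ^ k‖ ^ 2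
      = 2 * Real.pi * ∑ k ∈ Finset.range M, ‖b k‖ ^ 2 := by
  have key : ∀ θ : ℝ, ((‖∑ k ∈ Finset.range M, b k * ee θ ^ k‖ ^ 2 : ℝ) : ℂ)
      = ∑ k ∈ Finset.range M, ∑ l ∈ Finset.range M,
        b k * (starRingEnd ℂ) (b l) * (ee θ ^ k * (starRingEnd ℂ) (ee θ ^ l)) := by
    intro θ
    rw [← Complex.normSq_eq_norm_sq, ← Complex.mul_conj, map_sum, Finset.sum_mul_sum]
    refine Finset.sum_congr rfl fun k _ => Finset.sum_congr rfl fun l _ => ?_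
    simp only [map_mul]; ring
  have hcc : ∀ k l : ℕ, Continuous (fun θ => b k * (starRingEnd ℂ) (b l) *
      (ee θ ^ k * (starRingEnd ℂ) (ee θ ^ l))) := by
    intro k l
    have := ee_continuous
    have h2 : Continuous fun θ => (starRingEnd ℂ) (ee θ ^ l) :=
      Complex.continuous_conj.comp (this.pow l)
    fun_prop
  have hc : ∀ k l : ℕ, IntervalIntegrable (fun θ => b k * (starRingEnd ℂ) (b l) *
      (ee θ ^ k * (starRingEnd ℂ) (ee θ ^ l))) volume 0 (2 * Real.pi) :=
    fun k l => (hcc k l).intervalIntegrable _ _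
  have hC : ((∫ θ in (0:ℝ)..(2 * Real.pi), ‖∑ k ∈ Finset.range M, b k * ee θ ^ k‖ ^ 2 : ℝ) : ℂ)
      = ((2 * Real.pi * ∑ k ∈ Finset.range M, ‖b k‖ ^ 2 : ℝ) : ℂ) := by
    rw [← intervalIntegral.integral_ofReal]
    simp_rw [key]
    have hs : ∀ k, IntervalIntegrable (fun θ => ∑ l ∈ Finset.range M, b k *
        (starRingEnd ℂ) (b l) * (ee θ ^ k * (starRingEnd ℂ) (ee θ ^ l))) volume 0 (2 * Real.pi) :=
      fun k => (continuous_finsetSum _ fun l _ => hcc k l).intervalIntegrable _ _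
    rw [intervalIntegral.integral_finsetSum (fun k _ => hs k)]
    simp_rw [intervalIntegral.integral_finsetSum (fun l _ => hc _ l),
      intervalIntegral.integral_const_mul, integral_ee_pow_mul_conj]
    push_cast
    rw [Finset.mul_sum]
    refine Finset.sum_congr rfl fun k hk => ?_
    simp only [mul_ite, mul_zero, Finset.sum_ite_eq, hk, if_true]
    rw [Complex.mul_conj, Complex.normSq_eq_norm_sq]; push_cast; ring
  exact_mod_cast hC

lemma norm_one_sub_ee (θ : ℝ) (h : |θ| ≤ Real.pi) : 2 / Real.pi * |θ| ≤ ‖1 - ee θ‖ := by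
  have h1 : ‖1 - ee θ‖ = ‖2 * Real.sin (θ / 2)‖ := by
    rw [norm_sub_rev, ee, mul_comm, Complex.norm_exp_I_mul_ofReal_sub_one]
  have h2 := Real.mul_abs_le_abs_sin (x := θ / 2) (by rw [abs_div]; simp; linarith)
  rw [h1, norm_mul, Real.norm_eq_abs, Real.norm_eq_abs]
  rw [abs_div] at h2
  simp only [abs_two] at h2 ⊢
  linarith

/-- `∫ dθ / (1 + N²|1 - e^{iθ}|²) = O(1/N)`, as `|1 - e^{iθ}| ≥ 2|θ|/π` on `[-π, π]`. -/
lemma integral_inv_weight (N : ℝ) (hN : 0 < N) :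
    ∫ θ in (0:ℝ)..(2 * Real.pi), (1 + N ^ 2 * ‖1 - ee θ‖ ^ 2)⁻¹ ≤ Real.pi ^ 2 / (2 * N) := by
  have hpi := Real.pi_pos
  have hper : Function.Periodic (fun θ => (1 + N ^ 2 * ‖1 - ee θ‖ ^ 2)⁻¹) (2 * Real.pi) := by
    intro θ; simp only [ee_periodic θ]
  have h0 := hper.intervalIntegral_add_eq 0 (-Real.pi)
  rw [zero_add, show -Real.pi + 2 * Real.pi = Real.pi by ring] at h0
  rw [h0]
  have hcont : Continuous (fun θ => (1 + N ^ 2 * ‖1 - ee θ‖ ^ 2)⁻¹) := by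
    have := ee_continuous
    refine Continuous.inv₀ (by fun_prop) fun θ => by positivity
  set c : ℝ := 2 * N / Real.pi with hc
  have hcpos : 0 < c := by positivity
  have hintg : Integrable (fun θ : ℝ => (1 + (c * θ) ^ 2)⁻¹) :=
    integrable_inv_one_add_sq.comp_mul_left' hcpos.ne'
  calc ∫ θ in (-Real.pi)..Real.pi, (1 + N ^ 2 * ‖1 - ee θ‖ ^ 2)⁻¹
      ≤ ∫ θ in (-Real.pi)..Real.pi, (1 + (c * θ) ^ 2)⁻¹ := by
        refine intervalIntegral.integral_mono_on (by linarith) (hcont.intervalIntegrable _ _)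
          hintg.intervalIntegrable fun θ hθ => ?_
        have h := norm_one_sub_ee θ (abs_le.2 ⟨hθ.1, hθ.2⟩)
        apply inv_anti₀ (by positivity)
        have h' : (c * θ) ^ 2 = N ^ 2 * (2 / Real.pi * |θ|) ^ 2 := by
          rw [mul_pow, mul_pow, sq_abs, hc]; ring
        rw [h']
        gcongr
    _ ≤ ∫ θ : ℝ, (1 + (c * θ) ^ 2)⁻¹ := by
        rw [intervalIntegral.integral_of_le (by linarith)]
        exact setIntegral_le_integral hintg (Eventually.of_forall fun θ => by positivity)
    _ = Real.pi ^ 2 / (2 * N) := by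
        rw [Measure.integral_comp_mul_left (fun x => (1 + x ^ 2)⁻¹), integral_univ_inv_one_add_sq,
          abs_of_pos (by positivity), smul_eq_mul, hc]
        field_simp

/-- An `L¹` bound for a trigonometric polynomial of degree `O(N)` whose coefficients are `O(A)`
with first differences `O(A/N)`: weigh by `1 + N²|1 - e^{iθ}|²` and apply Parseval to `P` and
to `(1 - e^{iθ})P`. -/
lemma block_L1 (L N : ℕ) (hL : 1 ≤ L) (hN : 1 ≤ N) (A : ℝ) (hA : 0 ≤ A) (b : ℕ → ℂ)
    (hsupp : ∀ k, L * N ≤ k → b k = 0) (hb : ∀ k, ‖b k‖ ≤ A) (hb0 : ‖b 0‖ ≤ A / N)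
    (hd : ∀ k, ‖b (k + 1) - b k‖ ≤ A / N) :
    ∫ θ in (0:ℝ)..(2 * Real.pi), ‖∑ k ∈ Finset.range (L * N), b k * ee θ ^ k‖
      ≤ (20 * L) * A := by
  have hN' : (0:ℝ) < N := by exact_mod_cast hN
  have hpi := Real.pi_pos
  rcases hA.eq_or_lt with rfl | hA
  · have : ∀ k, b k = 0 := fun k => norm_le_zero_iff.1 (hb k)
    simp [this]
  set P : ℝ → ℂ := fun θ => ∑ k ∈ Finset.range (L * N), b k * ee θ ^ k with hP
  have hPc : Continuous P := by have := ee_continuous; fun_prop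
  let d : ℕ → ℂ := fun k => if k = 0 then b 0 else b k - b (k - 1)
  have hdn : ∀ k, ‖d k‖ ≤ A / N := by
    intro k
    rcases k with _ | k
    · simpa [d] using hb0
    · simpa [d] using hd k
  have hmul : ∀ θ, (1 - ee θ) * P θ = ∑ k ∈ Finset.range (L * N + 1), d k * ee θ ^ k := by
    intro θ
    have h1 : ∀ M, ∑ k ∈ Finset.range (M + 1), d k * ee θ ^ k
        = (1 - ee θ) * (∑ k ∈ Finset.range M, b k * ee θ ^ k) + b M * ee θ ^ M := by
      intro M
      induction M with
      | zero => simp [d]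
      | succ M ih =>
        rw [Finset.sum_range_succ, ih, Finset.sum_range_succ _ M]
        simp only [d, Nat.succ_ne_zero, if_false, Nat.add_sub_cancel]
        ring
    rw [h1, hsupp _ le_rfl, zero_mul, add_zero]
  have hp1 := parseval (L * N) b
  have hp2 := parseval (L * N + 1) d
  have hs1 : ∑ k ∈ Finset.range (L * N), ‖b k‖ ^ 2 ≤ L * N * A ^ 2 := by
    calc _ ≤ ∑ k ∈ Finset.range (L * N), A ^ 2 :=
          Finset.sum_le_sum fun k _ => pow_le_pow_left₀ (norm_nonneg _) (hb k) 2
      _ = _ := by simp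
  have hs2 : ∑ k ∈ Finset.range (L * N + 1), ‖d k‖ ^ 2 ≤ (L * N + 1) * (A / N) ^ 2 := by
    calc _ ≤ ∑ k ∈ Finset.range (L * N + 1), (A / N) ^ 2 :=
          Finset.sum_le_sum fun k _ => pow_le_pow_left₀ (norm_nonneg _) (hdn k) 2
      _ = _ := by simp
  -- `2|P| ≤ |P|² u / (AN) + AN / u` with `u = 1 + N²|1 - e|²`
  have hpt : ∀ θ, ‖P θ‖ ≤ (2 * (A * N))⁻¹ * ‖P θ‖ ^ 2
      + (2 * (A * N))⁻¹ * N ^ 2 * ‖∑ k ∈ Finset.range (L * N + 1), d k * ee θ ^ k‖ ^ 2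
      + (A * N / 2) * (1 + (N:ℝ) ^ 2 * ‖1 - ee θ‖ ^ 2)⁻¹ := by
    intro θ
    rw [← hmul, norm_mul]
    set p := ‖P θ‖
    set t := ‖1 - ee θ‖
    have hu : 0 < 1 + (N:ℝ) ^ 2 * t ^ 2 := by positivity
    have hAN : 0 < A * N := by positivity
    have : (2 * (A * N))⁻¹ * p ^ 2 + (2 * (A * N))⁻¹ * N ^ 2 * (t * p) ^ 2
        + (A * N / 2) * (1 + (N:ℝ) ^ 2 * t ^ 2)⁻¹ - p
        = (p * (1 + (N:ℝ) ^ 2 * t ^ 2) - A * N) ^ 2 / (2 * (A * N) * (1 + (N:ℝ) ^ 2 * t ^ 2)) := by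
      field_simp; ring
    have h2 : 0 ≤ (p * (1 + (N:ℝ) ^ 2 * t ^ 2) - A * N) ^ 2
        / (2 * (A * N) * (1 + (N:ℝ) ^ 2 * t ^ 2)) := by positivity
    linarith
  have hce := ee_continuous
  have hc1 : Continuous fun θ => (2 * (A * N))⁻¹ * ‖P θ‖ ^ 2 := by fun_prop
  have hc2 : Continuous fun θ => (2 * (A * N))⁻¹ * N ^ 2 *
      ‖∑ k ∈ Finset.range (L * N + 1), d k * ee θ ^ k‖ ^ 2 := by fun_prop
  have hc3 : Continuous fun θ => (A * N / 2) * (1 + (N:ℝ) ^ 2 * ‖1 - ee θ‖ ^ 2)⁻¹ :=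
    continuous_const.mul (Continuous.inv₀ (by fun_prop) fun θ => by positivity)
  have hc12 : Continuous fun θ => (2 * (A * N))⁻¹ * ‖P θ‖ ^ 2 + (2 * (A * N))⁻¹ * N ^ 2 *
      ‖∑ k ∈ Finset.range (L * N + 1), d k * ee θ ^ k‖ ^ 2 := hc1.add hc2
  have hc123 : Continuous fun θ => (2 * (A * N))⁻¹ * ‖P θ‖ ^ 2 + (2 * (A * N))⁻¹ * N ^ 2 *
      ‖∑ k ∈ Finset.range (L * N + 1), d k * ee θ ^ k‖ ^ 2
      + (A * N / 2) * (1 + (N:ℝ) ^ 2 * ‖1 - ee θ‖ ^ 2)⁻¹ := hc12.add hc3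
  have hintg := intervalIntegral.integral_mono_on (a := 0) (b := 2 * Real.pi) (μ := volume)
    (by linarith) (hPc.norm.intervalIntegrable _ _)
    (hc123.intervalIntegrable _ _) (fun θ _ => hpt θ)
  rw [intervalIntegral.integral_add (hc12.intervalIntegrable _ _)
      (hc3.intervalIntegrable _ _),
    intervalIntegral.integral_add (hc1.intervalIntegrable _ _) (hc2.intervalIntegrable _ _),
    intervalIntegral.integral_const_mul, intervalIntegral.integral_const_mul,
    intervalIntegral.integral_const_mul, hp1, hp2] at hintg
  have hw := integral_inv_weight N hN'
  have hL' : (1:ℝ) ≤ L := by exact_mod_cast hL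
  have hN1 : (1:ℝ) ≤ N := by exact_mod_cast hN
  have e1 : (2 * (A * N))⁻¹ * (2 * Real.pi * ∑ k ∈ Finset.range (L * N), ‖b k‖ ^ 2)
      ≤ Real.pi * L * A := by
    calc _ ≤ (2 * (A * N))⁻¹ * (2 * Real.pi * (L * N * A ^ 2)) := by gcongr
      _ = _ := by field_simp
  have e2 : (2 * (A * N))⁻¹ * N ^ 2 * (2 * Real.pi * ∑ k ∈ Finset.range (L * N + 1), ‖d k‖ ^ 2)
      ≤ 2 * Real.pi * L * A := by
    calc _ ≤ (2 * (A * N))⁻¹ * N ^ 2 * (2 * Real.pi * ((L * N + 1) * (A / N) ^ 2)) := by gcongr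
      _ = Real.pi * A * ((L * N + 1) / N) := by field_simp
      _ ≤ Real.pi * A * (2 * L) := by
        gcongr
        rw [div_le_iff₀ hN']; nlinarith
      _ = _ := by ring
  have e3 : (A * N / 2) * ∫ θ in (0:ℝ)..(2 * Real.pi), (1 + (N:ℝ) ^ 2 * ‖1 - ee θ‖ ^ 2)⁻¹
      ≤ Real.pi ^ 2 / 4 * A := by
    calc _ ≤ (A * N / 2) * (Real.pi ^ 2 / (2 * N)) := by gcongr
      _ = _ := by field_simp; ring
  have hpi4 := Real.pi_lt_d2
  have f1 : Real.pi * L * A ≤ 3.15 * (L * A) := by nlinarith [mul_pos (by linarith : (0:ℝ) < L) hA]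
  have f2 : Real.pi ^ 2 / 4 * A ≤ 3 * (L * A) := by
    have : Real.pi ^ 2 / 4 ≤ 3 := by nlinarith
    nlinarith
  have f3 : 0 ≤ L * A := by positivity
  linarith

/-! ### Rotations and polar coordinates in `ℂⁿ` -/

/-- Multiplication by `e^{iθ}` as a real-linear isometry of `ℂⁿ`. -/
def rot (n : ℕ) (θ : ℝ) : En n ≃ₗᵢ[ℝ] En n where
  toLinearEquiv := (LinearEquiv.smulOfNeZero ℂ (En n) (ee θ) (ee_ne_zero θ)).restrictScalars ℝ
  norm_map' x := by
    change ‖ee θ • x‖ = ‖x‖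
    rw [norm_smul, norm_ee, one_mul]

lemma rot_mp (n : ℕ) (θ : ℝ) :
    MeasurePreserving (fun ξ : En n => ee θ • ξ) volume volume :=
  (rot n θ).measurePreserving

lemma rot_emb (n : ℕ) (θ : ℝ) : MeasurableEmbedding (fun ξ : En n => ee θ • ξ) :=
  (rot n θ).toHomeomorph.measurableEmbedding

lemma rot_cont (n : ℕ) : Continuous (fun p : ℝ × En n => ee p.1 • p.2) := by
  have := ee_continuous
  fun_prop

/-- An integral over `ℂⁿ` is unchanged by averaging the integrand over circles. -/
lemma rot_average (n : ℕ) (F : En n → ℂ) (hF : Integrable F) :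
    ∫ ξ, F ξ = ∫ ξ, ((2 * Real.pi)⁻¹ : ℝ) • ∫ θ in (0:ℝ)..(2 * Real.pi), F (ee θ • ξ) := by
  set μ : Measure ℝ := volume.restrict (Set.Ioc 0 (2 * Real.pi)) with hμ
  have hpi := Real.pi_pos
  have hmp : MeasurePreserving (fun p : ℝ × En n => (p.1, ee p.1 • p.2))
      (μ.prod volume) (μ.prod volume) :=
    (MeasurePreserving.id μ).skew_product (g := fun θ ξ => ee θ • ξ)
      (rot_cont n).measurable (Eventually.of_forall fun θ => (rot_mp n θ).map_eq)
  have hG : Integrable (fun p : ℝ × En n => F (ee p.1 • p.2)) (μ.prod volume) :=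
    hmp.integrable_comp_of_integrable (hF.comp_snd μ)
  have h1 := integral_integral_swap (μ := μ) (ν := (volume : Measure (En n)))
    (f := fun θ ξ => F (ee θ • ξ)) hG
  have h2 : ∀ θ, ∫ ξ, F (ee θ • ξ) = ∫ ξ, F ξ := fun θ =>
    (rot_mp n θ).integral_comp (rot_emb n θ) F
  simp_rw [h2] at h1
  rw [integral_smul]
  have h3 : ∀ ξ : En n, ∫ θ in (0:ℝ)..(2 * Real.pi), F (ee θ • ξ) = ∫ θ, F (ee θ • ξ) ∂μ :=
    fun ξ => intervalIntegral.integral_of_le (by linarith)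
  simp_rw [h3]
  rw [← h1, integral_const, smul_smul]
  have : μ.real Set.univ = 2 * Real.pi := by
    simp [hμ, Measure.real, hpi.le]
  rw [this, inv_mul_cancel₀ (by positivity), one_smul]

lemma rot_average_lintegral (n : ℕ) (F : En n → ENNReal) (hF : Measurable F) :
    ENNReal.ofReal (2 * Real.pi) * ∫⁻ ξ, F ξ
      = ∫⁻ ξ, ∫⁻ θ in Set.Ioc 0 (2 * Real.pi), F (ee θ • ξ) := by
  have h1 := lintegral_lintegral_swap (μ := (volume : Measure (En n)))
    (ν := (volume : Measure ℝ).restrict (Set.Ioc 0 (2 * Real.pi)))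
    (f := fun ξ θ => F (ee θ • ξ))
    (hF.comp ((rot_cont n).measurable.comp measurable_swap)).aemeasurable
  rw [h1]
  have h2 : ∀ θ, ∫⁻ ξ, F (ee θ • ξ) = ∫⁻ ξ, F ξ := fun θ =>
    (rot_mp n θ).lintegral_comp hF
  simp_rw [h2]
  simp [mul_comm]

lemma finrank_En (n : ℕ) : Module.finrank ℝ (En n) = 2 * n := by
  rw [← Module.finrank_mul_finrank ℝ ℂ (En n)]
  simp

/-- Polar coordinates for a function homogeneous of degree `m` times a radial one. -/
lemma polar_integral (n m : ℕ) (hn : 1 ≤ n) (f : En n → ℂ)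
    (hf : ∀ (t : ℝ) (ξ : En n), 0 < t → f ((t:ℂ) • ξ) = (t:ℂ) ^ m * f ξ) (Φ : ℝ → ℝ) :
    ∫ ξ, f ξ * (Φ ‖ξ‖ : ℂ)
      = (∫ σ : sphere (0 : En n) 1, f σ ∂(volume : Measure (En n)).toSphere)
        * ((∫ r in Set.Ioi (0:ℝ), r ^ (m + 2 * n - 1) * Φ r : ℝ) : ℂ) := by
  set μ : Measure (En n) := volume
  have hNe : Nontrivial (En n) := by
    apply Module.nontrivial_of_finrank_pos (R := ℝ)
    rw [finrank_En]; omega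
  calc ∫ ξ, f ξ * (Φ ‖ξ‖ : ℂ)
      = ∫ x : ({(0)}ᶜ : Set (En n)), f x.1 * (Φ ‖x.1‖ : ℂ) ∂(μ.comap (↑)) := by
        rw [integral_subtype_comap (measurableSet_singleton _).compl
          fun x => f x * (Φ ‖x‖ : ℂ), restrict_compl_singleton]
    _ = ∫ p, f (p.1 : En n) * (((p.2 : ℝ):ℂ) ^ m * (Φ p.2 : ℂ))
          ∂μ.toSphere.prod (.volumeIoiPow (Module.finrank ℝ (En n) - 1)) := by
        rw [← μ.measurePreserving_homeomorphUnitSphereProd.integral_comp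
          (Homeomorph.measurableEmbedding _)]
        refine integral_congr_ae (Eventually.of_forall fun x => ?_)
        have hx : 0 < ‖x.1‖ := norm_pos_iff.2 x.2
        simp only [homeomorphUnitSphereProd_apply_fst_coe, homeomorphUnitSphereProd_apply_snd_coe]
        have := hf ‖x.1‖ (‖x.1‖⁻¹ • x.1) hx
        have h2 : ((‖x.1‖ : ℝ) : ℂ) • (‖x.1‖⁻¹ • x.1) = x.1 := by
          have : ((‖x.1‖ : ℝ) : ℂ) • (‖x.1‖⁻¹ • x.1) = ‖x.1‖ • (‖x.1‖⁻¹ • x.1) := by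
            ext i; simp
          rw [this, smul_smul, mul_inv_cancel₀ hx.ne', one_smul]
        rw [h2] at this
        rw [this]; ring
    _ = (∫ σ : sphere (0 : En n) 1, f σ ∂μ.toSphere) *
          ∫ r : Set.Ioi (0:ℝ), (((r : ℝ):ℂ) ^ m * (Φ r : ℂ))
            ∂.volumeIoiPow (Module.finrank ℝ (En n) - 1) :=
        integral_prod_mul (fun σ : sphere (0 : En n) 1 => f σ)
          (fun r : Set.Ioi (0:ℝ) => (((r : ℝ):ℂ) ^ m * (Φ r : ℂ)))
    _ = _ := by
      congr 1
      simp only [Measure.volumeIoiPow, ENNReal.ofReal]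
      rw [integral_withDensity_eq_integral_smul
        ((measurable_subtype_coe.pow_const _).real_toNNReal),
        integral_subtype_comap measurableSet_Ioi fun a : ℝ =>
          Real.toNNReal (a ^ (Module.finrank ℝ (En n) - 1)) • (((a : ℝ):ℂ) ^ m * (Φ a : ℂ)),
        ← integral_complex_ofReal]
      refine setIntegral_congr_fun measurableSet_Ioi fun x hx => ?_
      rw [finrank_En]
      simp only [NNReal.smul_def, Real.coe_toNNReal _ (pow_nonneg (le_of_lt hx) _)]
      rw [show m + 2 * n - 1 = m + (2 * n - 1) by omega, pow_add]
      simp only [Complex.real_smul]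
      push_cast; ring

lemma polar_lintegral (n m : ℕ) (hn : 1 ≤ n) (f : En n → ENNReal) (hfm : Measurable f)
    (hf : ∀ (t : ℝ) (ξ : En n), 0 < t → f ((t:ℂ) • ξ) = ENNReal.ofReal (t ^ m) * f ξ)
    (Φ : ℝ → ENNReal) (hΦ : Measurable Φ) :
    ∫⁻ ξ, f ξ * Φ ‖ξ‖
      = (∫⁻ σ : sphere (0 : En n) 1, f σ ∂(volume : Measure (En n)).toSphere)
        * ∫⁻ r in Set.Ioi (0:ℝ), ENNReal.ofReal (r ^ (m + 2 * n - 1)) * Φ r := by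
  set μ : Measure (En n) := volume
  have hNe : Nontrivial (En n) := by
    apply Module.nontrivial_of_finrank_pos (R := ℝ)
    rw [finrank_En]; omega
  calc ∫⁻ ξ, f ξ * Φ ‖ξ‖
      = ∫⁻ x : ({(0)}ᶜ : Set (En n)), f x.1 * Φ ‖x.1‖ ∂(μ.comap (↑)) := by
        rw [lintegral_subtype_comap (measurableSet_singleton _).compl
          (fun x => f x * Φ ‖x‖), restrict_compl_singleton]
    _ = ∫⁻ p, f (p.1 : En n) * (ENNReal.ofReal ((p.2 : ℝ) ^ m) * Φ p.2)
          ∂μ.toSphere.prod (.volumeIoiPow (Module.finrank ℝ (En n) - 1)) := by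
        rw [← μ.measurePreserving_homeomorphUnitSphereProd.lintegral_comp (by fun_prop)]
        refine lintegral_congr fun x => ?_
        have hx : 0 < ‖x.1‖ := norm_pos_iff.2 x.2
        simp only [homeomorphUnitSphereProd_apply_fst_coe, homeomorphUnitSphereProd_apply_snd_coe]
        have := hf ‖x.1‖ (‖x.1‖⁻¹ • x.1) hx
        have h2 : ((‖x.1‖ : ℝ) : ℂ) • (‖x.1‖⁻¹ • x.1) = x.1 := by
          have : ((‖x.1‖ : ℝ) : ℂ) • (‖x.1‖⁻¹ • x.1) = ‖x.1‖ • (‖x.1‖⁻¹ • x.1) := by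
            ext i; simp
          rw [this, smul_smul, mul_inv_cancel₀ hx.ne', one_smul]
        rw [h2] at this
        rw [this]; ring
    _ = (∫⁻ σ : sphere (0 : En n) 1, f σ ∂μ.toSphere) *
          ∫⁻ r : Set.Ioi (0:ℝ), (ENNReal.ofReal ((r : ℝ) ^ m) * Φ r)
            ∂.volumeIoiPow (Module.finrank ℝ (En n) - 1) :=
        lintegral_prod_mul (f := fun σ : sphere (0 : En n) 1 => f σ)
          (g := fun r : Set.Ioi (0:ℝ) => ENNReal.ofReal ((r : ℝ) ^ m) * Φ r)
          (by fun_prop) (by fun_prop)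
    _ = _ := by
      congr 1
      rw [Measure.volumeIoiPow, lintegral_withDensity_eq_lintegral_mul _ (by fun_prop)
        (by fun_prop)]
      simp only [Pi.mul_apply]
      rw [lintegral_subtype_comap measurableSet_Ioi (fun a : ℝ =>
          ENNReal.ofReal (a ^ (Module.finrank ℝ (En n) - 1)) * (ENNReal.ofReal (a ^ m) * Φ a))]
      refine setLIntegral_congr_fun measurableSet_Ioi fun x hx => ?_
      have hx' : (0:ℝ) ≤ x := le_of_lt hx
      rw [finrank_En]
      rw [show m + 2 * n - 1 = m + (2 * n - 1) by omega, pow_add, ENNReal.ofReal_mul (by positivity)]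
      ring

/-! ### Homogeneous components of holomorphic functions -/

lemma ee_conj (θ : ℝ) : (starRingEnd ℂ) (ee θ) = (ee θ)⁻¹ :=
  eq_inv_of_mul_eq_one_right (ee_mul_conj θ)

lemma cauchy_coeff (f : ℂ → ℂ) (r : ℝ) (hr : 0 < r) (k : ℕ) :
    cauchyPowerSeries f 0 r k (fun _ => (1:ℂ))
      = ((r:ℂ) ^ k)⁻¹ * (((2 * Real.pi : ℝ) : ℂ)⁻¹
        * ∫ θ in (0:ℝ)..(2 * Real.pi), (starRingEnd ℂ) (ee θ) ^ k * f (r * ee θ)) := by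
  rw [cauchyPowerSeries_apply, circleIntegral, smul_eq_mul,
    ← intervalIntegral.integral_const_mul, ← intervalIntegral.integral_const_mul,
    ← intervalIntegral.integral_const_mul]
  refine intervalIntegral.integral_congr fun θ _ => ?_
  have hcm : circleMap 0 r θ = r * ee θ := by simp [circleMap, ee]
  simp only [deriv_circleMap, hcm, smul_eq_mul, sub_zero, ee_conj]
  have h1 := ee_ne_zero θ
  have h2 : (r:ℂ) ≠ 0 := by exact_mod_cast hr.ne'
  have h3 : (Real.pi : ℂ) ≠ 0 := by exact_mod_cast Real.pi_pos.ne'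
  push_cast
  rw [one_div_pow, mul_pow, inv_pow]
  field_simp

lemma intervalIntegral_swap_cont {F : ℝ × ℝ → ℂ} (hF : Continuous F) {a b c d : ℝ} :
    ∫ x in a..b, ∫ y in c..d, F (x, y) = ∫ y in c..d, ∫ x in a..b, F (x, y) := by
  refine MeasureTheory.intervalIntegral_intervalIntegral_swap (F := fun x y => F (x, y)) ?_
  exact (hF.continuousOn.integrableOn_compact (isCompact_uIcc.prod isCompact_uIcc)).mono_set
    (Set.prod_mono Set.uIoc_subset_uIcc Set.uIoc_subset_uIcc)

/-- The Taylor expansion at `0` of a function holomorphic on the disc of radius `R`, with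
coefficients given by averages over the circle of radius `r < R`. -/
lemma taylor_circle (f : ℂ → ℂ) (R r : ℝ) (hr : 0 < r) (hrR : r < R)
    (hf : DifferentiableOn ℂ f (ball 0 R)) (w : ℂ) (hw : ‖w‖ < r) :
    HasSum (fun k => ((r:ℂ) ^ k)⁻¹ * (((2 * Real.pi : ℝ) : ℂ)⁻¹
        * ∫ θ in (0:ℝ)..(2 * Real.pi), (starRingEnd ℂ) (ee θ) ^ k * f (r * ee θ)) * w ^ k) (f w) := by
  lift r to NNReal using hr.le
  have h := (hf.mono (closedBall_subset_ball hrR)).hasFPowerSeriesOnBall (by exact_mod_cast hr)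
  have h2 := h.hasSum (y := w) (by
    rw [Metric.eball_coe, mem_ball, dist_zero_right]; exact hw)
  rw [zero_add] at h2
  refine Eq.mp (congrArg (fun F : ℕ → ℂ => HasSum F (f w)) (funext fun k => Eq.symm ?_)) h2
  rw [← cauchy_coeff f r hr k, mul_comm]
  have := (cauchyPowerSeries f 0 r k).map_smul_univ (fun _ => w) (fun _ => (1:ℂ))
  simp only [smul_eq_mul, mul_one, Finset.prod_const, Finset.card_univ, Fintype.card_fin] at this
  exact this.symm

lemma circle_coeff_indep (f : ℂ → ℂ) (R r s : ℝ) (hr : 0 < r) (hrR : r < R) (hs : 0 < s)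
    (hsR : s < R) (hf : DifferentiableOn ℂ f (ball 0 R)) (k : ℕ) :
    ((r:ℂ) ^ k)⁻¹ * (((2 * Real.pi : ℝ) : ℂ)⁻¹
        * ∫ θ in (0:ℝ)..(2 * Real.pi), (starRingEnd ℂ) (ee θ) ^ k * f (r * ee θ))
    = ((s:ℂ) ^ k)⁻¹ * (((2 * Real.pi : ℝ) : ℂ)⁻¹
        * ∫ θ in (0:ℝ)..(2 * Real.pi), (starRingEnd ℂ) (ee θ) ^ k * f (s * ee θ)) := by
  have h1 := (hf.mono (closedBall_subset_ball hrR)).hasFPowerSeriesOnBall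
    (R := ⟨r, hr.le⟩) hr
  have h2 := (hf.mono (closedBall_subset_ball hsR)).hasFPowerSeriesOnBall
    (R := ⟨s, hs.le⟩) hs
  have h3 := h1.hasFPowerSeriesAt.eq_formalMultilinearSeries h2.hasFPowerSeriesAt
  rw [← cauchy_coeff f r hr k, ← cauchy_coeff f s hs k]
  exact congrArg (fun p : FormalMultilinearSeries ℂ ℂ ℂ => p k (fun _ => (1:ℂ))) h3

lemma circle_mean_value (f : ℂ → ℂ) (hf : Differentiable ℂ f) :
    ((2 * Real.pi : ℝ) : ℂ)⁻¹ * ∫ θ in (0:ℝ)..(2 * Real.pi), f (ee θ) = f 0 := by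
  have h := taylor_circle f 2 1 one_pos one_lt_two hf.differentiableOn 0 (by simp)
  have h2 := h.unique (hasSum_single 0 (fun k hk => by simp [hk]))
  simpa using h2.symm

/-- The degree `k` homogeneous component of a function `g` holomorphic on the unit ball, as a
function on all of `ℂⁿ`: the `k`-th Taylor coefficient at `0` of `λ ↦ g (λ ξ)`, written as an
average over the circle `|λ| = 1 / (2 (1 + ‖ξ‖))`, on which `λ ξ` stays in the ball. -/
def hp {n : ℕ} (g : En n → ℂ) (k : ℕ) (ξ : En n) : ℂ :=
  ((2 * (1 + ‖ξ‖) : ℝ) : ℂ) ^ k * (((2 * Real.pi : ℝ) : ℂ)⁻¹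
    * ∫ θ in (0:ℝ)..(2 * Real.pi), (starRingEnd ℂ) (ee θ) ^ k *
        g (((((2 * (1 + ‖ξ‖) : ℝ) : ℂ)⁻¹) * ee θ) • ξ))


lemma line_diff {n : ℕ} {g : En n → ℂ} (hg : DifferentiableOn ℂ g (Bl n))
    (ξ : En n) (R : ℝ) (hR : R * ‖ξ‖ ≤ 1) :
    DifferentiableOn ℂ (fun c : ℂ => g (c • ξ)) (ball 0 R) := by
  refine hg.comp (by fun_prop) fun c hc => ?_
  simp only [Bl, mem_ball, dist_zero_right] at hc ⊢
  rw [norm_smul]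
  by_cases h : ‖ξ‖ = 0
  · rw [h]; simp
  · have : 0 < ‖ξ‖ := lt_of_le_of_ne (norm_nonneg _) (Ne.symm h)
    nlinarith

lemma hp_eq {n : ℕ} {g : En n → ℂ} (hg : DifferentiableOn ℂ g (Bl n))
    (k : ℕ) (ξ : En n) (r : ℝ) (hr : 0 < r) (hrξ : r * ‖ξ‖ < 1) :
    hp g k ξ = ((r:ℂ) ^ k)⁻¹ * (((2 * Real.pi : ℝ) : ℂ)⁻¹
      * ∫ θ in (0:ℝ)..(2 * Real.pi), (starRingEnd ℂ) (ee θ) ^ k * g ((r * ee θ) • ξ)) := by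
  have hξ := norm_nonneg ξ
  obtain ⟨R, hrR, hR, hR2⟩ : ∃ R, r < R ∧ R * ‖ξ‖ ≤ 1 ∧ (2 * (1 + ‖ξ‖))⁻¹ < R := by
    by_cases h : ‖ξ‖ = 0
    · exact ⟨r + 1, by linarith, by rw [h]; simp, by rw [h]; norm_num; linarith⟩
    · have hp : 0 < ‖ξ‖ := lt_of_le_of_ne hξ (Ne.symm h)
      refine ⟨‖ξ‖⁻¹, by rwa [lt_inv_comm₀ hr hp, ← one_div, lt_div_iff₀ hr, mul_comm],
        by rw [inv_mul_cancel₀ h], inv_strictAnti₀ hp (by linarith)⟩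
  have := circle_coeff_indep (fun c : ℂ => g (c • ξ)) R r (2 * (1 + ‖ξ‖))⁻¹ hr hrR
    (by positivity) hR2 (line_diff hg ξ R hR) k
  rw [this, hp]
  push_cast
  rw [inv_pow, inv_inv]

lemma hp_hasSum {n : ℕ} {g : En n → ℂ} (hg : DifferentiableOn ℂ g (Bl n))
    (ξ : En n) (hξ : ξ ∈ Bl n) : HasSum (fun k => hp g k ξ) (g ξ) := by
  have h1 : ‖ξ‖ < 1 := by simpa [Bl] using hξ
  have h0 := norm_nonneg ξ
  obtain ⟨r, hr1, R, hrR, hR⟩ : ∃ r, 1 < r ∧ ∃ R, r < R ∧ R * ‖ξ‖ ≤ 1 := by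
    by_cases h : ‖ξ‖ = 0
    · exact ⟨2, by norm_num, 3, by norm_num, by rw [h]; simp⟩
    · have hp : 0 < ‖ξ‖ := lt_of_le_of_ne h0 (Ne.symm h)
      have : 1 < ‖ξ‖⁻¹ := (one_lt_inv₀ hp).2 h1
      obtain ⟨r, h2, h3⟩ := exists_between this
      exact ⟨r, h2, ‖ξ‖⁻¹, h3, by rw [inv_mul_cancel₀ h]⟩
  have hs := taylor_circle (fun c : ℂ => g (c • ξ)) R r (by linarith) hrR
    (line_diff hg ξ R hR) 1 (by simpa using hr1)
  rw [one_smul] at hs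
  convert hs using 2 with k
  rw [one_pow, mul_one]
  refine hp_eq hg k ξ r (by linarith) ?_
  by_cases h : ‖ξ‖ = 0
  · rw [h]; simp
  · have hp : 0 < ‖ξ‖ := lt_of_le_of_ne h0 (Ne.symm h)
    nlinarith

lemma scaled_cont {n : ℕ} {g : En n → ℂ} (hg : DifferentiableOn ℂ g (Bl n))
    : Continuous (fun p : En n × ℝ =>
    g (((((2 * (1 + ‖p.1‖) : ℝ) : ℂ)⁻¹) * ee p.2) • p.1)) := by
  have := ee_continuous
  refine hg.continuousOn.comp_continuous ?_ ?_
  · have h : Continuous fun p : En n × ℝ => (((2 * (1 + ‖p.1‖) : ℝ) : ℂ)⁻¹) := by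
      refine Continuous.inv₀ (by fun_prop) fun p => ?_
      have := norm_nonneg p.1
      exact_mod_cast (by positivity : (2 * (1 + ‖p.1‖)) ≠ 0)
    fun_prop
  · intro p
    have h0 := norm_nonneg p.1
    rw [Bl, mem_ball, dist_zero_right, norm_smul, norm_mul, norm_ee, norm_inv,
      Complex.norm_real, mul_one, Real.norm_of_nonneg (by positivity), inv_mul_lt_iff₀ (by positivity)]
    linarith

lemma hp_continuous {n : ℕ} {g : En n → ℂ} (hg : DifferentiableOn ℂ g (Bl n))
    (k : ℕ) : Continuous (hp g k) := by
  have h := scaled_cont hg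
  have h2 : Continuous fun ξ : En n => ∫ θ in (0:ℝ)..(2 * Real.pi), (starRingEnd ℂ) (ee θ) ^ k *
        g (((((2 * (1 + ‖ξ‖) : ℝ) : ℂ)⁻¹) * ee θ) • ξ) := by
    apply intervalIntegral.continuous_parametric_intervalIntegral_of_continuous'
    have h3 : Continuous fun p : En n × ℝ => (starRingEnd ℂ) (ee p.2) ^ k :=
      (Complex.continuous_conj.comp (ee_continuous.comp continuous_snd)).pow k
    exact h3.mul h
  unfold hp
  fun_prop

lemma hp_bound {n : ℕ} {g : En n → ℂ} (hg : DifferentiableOn ℂ g (Bl n))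
    (k : ℕ) : ∃ C, 0 ≤ C ∧ ∀ ξ : En n, ‖hp g k ξ‖ ≤ C * (1 + ‖ξ‖) ^ k := by
  have hcpt : IsCompact (closedBall (0 : En n) (1/2)) := isCompact_closedBall _ _
  have hsub : closedBall (0 : En n) (1/2) ⊆ Bl n := closedBall_subset_ball (by norm_num)
  obtain ⟨C, hC⟩ := hcpt.exists_bound_of_continuousOn (hg.continuousOn.mono hsub)
  have hC0 : 0 ≤ C := (norm_nonneg _).trans (hC 0 (by simp))
  refine ⟨2 ^ k * C, by positivity, fun ξ => ?_⟩
  have h0 := norm_nonneg ξ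
  have hpi := Real.pi_pos
  have hintg : ‖∫ θ in (0:ℝ)..(2 * Real.pi), (starRingEnd ℂ) (ee θ) ^ k *
        g (((((2 * (1 + ‖ξ‖) : ℝ) : ℂ)⁻¹) * ee θ) • ξ)‖ ≤ C * |2 * Real.pi - 0| := by
    refine intervalIntegral.norm_integral_le_of_norm_le_const fun θ _ => ?_
    rw [norm_mul, norm_pow, RCLike.norm_conj, norm_ee, one_pow, one_mul]
    apply hC
    rw [mem_closedBall, dist_zero_right, norm_smul, norm_mul, norm_ee, norm_inv,
      Complex.norm_real, mul_one, Real.norm_of_nonneg (by positivity), inv_mul_le_iff₀ (by positivity)]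
    linarith
  rw [hp, norm_mul, norm_mul, norm_pow, norm_inv, Complex.norm_real, Complex.norm_real,
    Real.norm_of_nonneg (by positivity), Real.norm_of_nonneg (by positivity)]
  rw [sub_zero, abs_of_pos (by positivity)] at hintg
  calc _ ≤ (2 * (1 + ‖ξ‖)) ^ k * ((2 * Real.pi)⁻¹ * (C * (2 * Real.pi))) := by gcongr
    _ = _ := by rw [mul_pow]; field_simp

lemma hp_real_smul {n : ℕ} {g : En n → ℂ} (hg : DifferentiableOn ℂ g (Bl n))
    (k : ℕ) (ξ : En n) (t : ℝ) (ht : 0 < t) :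
    hp g k ((t:ℂ) • ξ) = (t:ℂ) ^ k * hp g k ξ := by
  have h0 := norm_nonneg ξ
  have htc : (t:ℂ) ≠ 0 := by exact_mod_cast ht.ne'
  set r : ℝ := (1 + ‖ξ‖)⁻¹ with hr
  have hrp : 0 < r := by positivity
  have h1 : r * ‖ξ‖ < 1 := by rw [hr, inv_mul_lt_iff₀ (by positivity)]; linarith
  have hrc : (r:ℂ) ≠ 0 := by exact_mod_cast hrp.ne'
  have h2 : r / t * ‖(t:ℂ) • ξ‖ < 1 := by
    rw [norm_smul, Complex.norm_real, Real.norm_of_nonneg ht.le]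
    rwa [← mul_assoc, div_mul_cancel₀ _ ht.ne']
  rw [hp_eq hg k _ (r / t) (by positivity) h2, hp_eq hg k ξ r hrp h1]
  have h3 : ∀ θ, ((((r / t : ℝ) : ℂ) * ee θ) • ((t:ℂ) • ξ)) = ((r:ℂ) * ee θ) • ξ := by
    intro θ
    rw [smul_smul]; congr 1; push_cast; field_simp
  simp_rw [h3]
  push_cast
  rw [div_pow]
  field_simp

lemma hp_rot {n : ℕ} {g : En n → ℂ} (k : ℕ) (ξ : En n) (α : ℝ) : hp g k (ee α • ξ) = ee α ^ k * hp g k ξ := by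
  unfold hp
  have hn : ‖ee α • ξ‖ = ‖ξ‖ := by rw [norm_smul, norm_ee, one_mul]
  rw [hn]
  set c : ℂ := ((2 * (1 + ‖ξ‖) : ℝ) : ℂ)⁻¹
  set F : ℝ → ℂ := fun θ => (starRingEnd ℂ) (ee θ) ^ k * g ((c * ee θ) • ξ) with hF
  have hper : Function.Periodic F (2 * Real.pi) := by
    intro θ; simp only [hF, ee_periodic θ]
  have h1 : ∀ θ, (starRingEnd ℂ) (ee θ) ^ k * g ((c * ee θ) • ee α • ξ) = ee α ^ k * F (θ + α) := by
    intro θ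
    simp only [hF, ee_add, smul_smul, map_mul, mul_pow]
    have : ee α ^ k * ((starRingEnd ℂ) (ee α)) ^ k = 1 := by
      rw [← mul_pow, ee_mul_conj, one_pow]
    rw [← mul_assoc (c)]
    linear_combination (-(starRingEnd ℂ) (ee θ) ^ k * g ((c * ee θ * ee α) • ξ)) * this
  simp_rw [h1]
  rw [intervalIntegral.integral_const_mul, intervalIntegral.integral_comp_add_right,
    zero_add, add_comm (2 * Real.pi) α, hper.intervalIntegral_add_eq α 0, zero_add]
  ring

/-- The mean value property of the entire function `λ ↦ hp g k (λ ξ + w) e^{-λ c}`; it is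
inherited from `g` by exchanging the two circle averages. -/
lemma hp_mean {n : ℕ} {g : En n → ℂ} (hg : DifferentiableOn ℂ g (Bl n))
    (k : ℕ) (ξ w : En n) (c : ℂ) :
    ((2 * Real.pi : ℝ) : ℂ)⁻¹ * ∫ φ in (0:ℝ)..(2 * Real.pi),
      hp g k (ee φ • ξ + w) * Complex.exp (-(ee φ * c)) = hp g k w := by
  have hx := norm_nonneg ξ
  have hw := norm_nonneg w
  set r : ℝ := (2 * (1 + ‖ξ‖ + ‖w‖))⁻¹ with hr
  have hrp : 0 < r := by positivity
  have hr1 : r * (2 * ‖ξ‖ + ‖w‖) < 1 := by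
    rw [hr, inv_mul_lt_iff₀ (by positivity)]; linarith
  have key : ∀ (a : ℂ), ‖a‖ ≤ 2 → ∀ θ, (r * ee θ) • (a • ξ + w) ∈ Bl n := by
    intro a ha θ
    simp only [Bl, mem_ball, dist_zero_right, norm_smul, norm_mul, norm_ee, Complex.norm_real,
      mul_one, Real.norm_of_nonneg hrp.le]
    have : ‖a • ξ + w‖ ≤ 2 * ‖ξ‖ + ‖w‖ := by
      refine (norm_add_le _ _).trans ?_
      rw [norm_smul]; gcongr
    nlinarith
  have hnorm : ∀ φ, r * ‖ee φ • ξ + w‖ < 1 := by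
    intro φ
    have := key (ee φ) (by rw [norm_ee]; norm_num) 0
    rwa [Bl, mem_ball, dist_zero_right, norm_smul, norm_mul, norm_ee, mul_one, Complex.norm_real,
      Real.norm_of_nonneg hrp.le] at this
  have hwr : r * ‖w‖ < 1 := by nlinarith
  rw [hp_eq hg k w r hrp hwr]
  simp_rw [fun φ => hp_eq hg k (ee φ • ξ + w) r hrp (hnorm φ)]
  have hcont : Continuous fun p : ℝ × ℝ => (starRingEnd ℂ) (ee p.2) ^ k *
      g ((r * ee p.2) • (ee p.1 • ξ + w)) * Complex.exp (-(ee p.1 * c)) := by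
    have hee := ee_continuous
    have h3 : Continuous fun p : ℝ × ℝ => (starRingEnd ℂ) (ee p.2) ^ k :=
      (Complex.continuous_conj.comp (ee_continuous.comp continuous_snd)).pow k
    have h4 : Continuous fun p : ℝ × ℝ => g ((r * ee p.2) • (ee p.1 • ξ + w)) := by
      refine hg.continuousOn.comp_continuous (by fun_prop) fun p => ?_
      exact key _ (by rw [norm_ee]; norm_num) _
    exact (h3.mul h4).mul (by fun_prop)
  have hsw : ∫ φ in (0:ℝ)..(2 * Real.pi), ∫ θ in (0:ℝ)..(2 * Real.pi),
        (starRingEnd ℂ) (ee θ) ^ k * g ((r * ee θ) • (ee φ • ξ + w)) * Complex.exp (-(ee φ * c))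
      = ∫ θ in (0:ℝ)..(2 * Real.pi), ∫ φ in (0:ℝ)..(2 * Real.pi),
        (starRingEnd ℂ) (ee θ) ^ k * g ((r * ee θ) • (ee φ • ξ + w)) * Complex.exp (-(ee φ * c)) :=
    intervalIntegral_swap_cont hcont
  have hin : ∀ θ, ((2 * Real.pi : ℝ) : ℂ)⁻¹ * ∫ φ in (0:ℝ)..(2 * Real.pi),
      (starRingEnd ℂ) (ee θ) ^ k * g ((r * ee θ) • (ee φ • ξ + w)) * Complex.exp (-(ee φ * c))
      = (starRingEnd ℂ) (ee θ) ^ k * g ((r * ee θ) • w) := by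
    intro θ
    have hd : DifferentiableOn ℂ (fun a : ℂ => (starRingEnd ℂ) (ee θ) ^ k *
        g ((r * ee θ) • (a • ξ + w)) * Complex.exp (-(a * c))) (ball 0 2) := by
      have : DifferentiableOn ℂ (fun a : ℂ => g ((r * ee θ) • (a • ξ + w))) (ball 0 2) := by
        refine hg.comp (by fun_prop) fun a ha => key a ?_ θ
        simp only [mem_ball, dist_zero_right] at ha; exact ha.le
      exact (this.const_mul _).mul
        (by fun_prop : Differentiable ℂ fun a : ℂ => Complex.exp (-(a * c))).differentiableOn
    have h := taylor_circle _ 2 1 one_pos one_lt_two hd 0 (by simp)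
    have h2 := h.unique (hasSum_single 0 (fun k hk => by simp [hk]))
    simpa using h2.symm
  calc _ = ((r:ℂ) ^ k)⁻¹ * (((2 * Real.pi : ℝ) : ℂ)⁻¹ * (((2 * Real.pi : ℝ) : ℂ)⁻¹ *
        ∫ φ in (0:ℝ)..(2 * Real.pi), ∫ θ in (0:ℝ)..(2 * Real.pi),
        (starRingEnd ℂ) (ee θ) ^ k * g ((r * ee θ) • (ee φ • ξ + w)) *
          Complex.exp (-(ee φ * c)))) := by
        simp_rw [intervalIntegral.integral_mul_const, mul_assoc,
          intervalIntegral.integral_const_mul]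
        ring
    _ = _ := by
        rw [hsw, ← intervalIntegral.integral_const_mul]
        simp_rw [hin]

/-! ### Gaussian integrals of homogeneous components -/

/-- The coefficient of the exponential series, extracted by averaging over the circle. -/
lemma circle_exp (k : ℕ) (c : ℂ) :
    ∫ θ in (0:ℝ)..(2 * Real.pi), ee θ ^ k * Complex.exp ((starRingEnd ℂ) (ee θ) * c)
      = 2 * Real.pi * (c ^ k / k.factorial) := by
  have hpi := Real.pi_pos
  have hcont : Continuous fun θ => (starRingEnd ℂ) (ee θ) :=
    Complex.continuous_conj.comp ee_continuous
  have hee := ee_continuous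
  have h := intervalIntegral.hasSum_integral_of_dominated_convergence (μ := volume)
    (a := 0) (b := 2 * Real.pi)
    (F := fun (l : ℕ) θ => ee θ ^ k * (((starRingEnd ℂ) (ee θ) * c) ^ l / l.factorial))
    (f := fun θ => ee θ ^ k * Complex.exp ((starRingEnd ℂ) (ee θ) * c))
    (fun l _ => ‖c‖ ^ l / l.factorial)
    (fun l => Continuous.aestronglyMeasurable (by fun_prop))
    (fun l => Eventually.of_forall fun θ _ => by
      rw [norm_mul, norm_pow, norm_ee, one_pow, one_mul, norm_div, norm_pow, norm_mul,
        RCLike.norm_conj, norm_ee, one_mul, Complex.norm_natCast])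
    (Eventually.of_forall fun θ _ => Real.summable_pow_div_factorial _)
    (by simp)
    (Eventually.of_forall fun θ _ => by
      have := NormedSpace.exp_series_hasSum_exp' (𝕂 := ℂ) ((starRingEnd ℂ) (ee θ) * c)
      rw [← Complex.exp_eq_exp_ℂ] at this
      refine HasSum.mul_left _ ?_
      simpa [div_eq_inv_mul] using this)
  have h2 : ∀ l : ℕ, ∫ θ in (0:ℝ)..(2 * Real.pi),
      ee θ ^ k * (((starRingEnd ℂ) (ee θ) * c) ^ l / l.factorial)
      = if l = k then 2 * Real.pi * (c ^ k / k.factorial) else 0 := by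
    intro l
    have : ∀ θ, ee θ ^ k * (((starRingEnd ℂ) (ee θ) * c) ^ l / l.factorial)
        = (c ^ l / l.factorial) * (ee θ ^ k * (starRingEnd ℂ) (ee θ ^ l)) := by
      intro θ; rw [map_pow]; ring
    simp_rw [this]
    rw [intervalIntegral.integral_const_mul, integral_ee_pow_mul_conj]
    by_cases hkl : l = k
    · subst hkl; simp; ring
    · rw [if_neg hkl, if_neg (Ne.symm hkl), mul_zero]
  simp_rw [h2] at h
  exact h.unique (hasSum_ite_eq k _)

/-- The Gaussian integral over `ℂⁿ`. -/
def g0 (n : ℕ) : ℝ := ∫ ξ : En n, Real.exp (-‖ξ‖ ^ 2)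

lemma gauss_integrable (n : ℕ) (b : ℝ) (hb : 0 < b) :
    Integrable fun ξ : En n => Real.exp (-b * ‖ξ‖ ^ 2) := by
  have := GaussianFourier.integrable_cexp_neg_mul_sq_norm_add (V := En n) (b := (b:ℂ))
    (by simpa using hb) 0 0
  have := this.norm
  refine this.congr (Eventually.of_forall fun ξ => ?_)
  simp only [Complex.norm_exp]
  congr 1
  simp
  left
  norm_cast

lemma g0_pos (n : ℕ) : 0 < g0 n := by
  have h := gauss_integrable n 1 one_pos
  simp only [neg_mul, one_mul] at h
  unfold g0
  rw [integral_pos_iff_support_of_nonneg (fun ξ => (Real.exp_pos _).le) h]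
  have : Function.support (fun ξ : En n => Real.exp (-‖ξ‖ ^ 2)) = Set.univ := by
    ext ξ; simp [Real.exp_ne_zero]
  rw [this, pos_iff_ne_zero, Ne, Measure.measure_univ_eq_zero]
  exact NeZero.ne (volume : Measure (En n))

lemma gauss_dom (t W : ℝ) (k : ℕ) (ht : 0 ≤ t) :
    (1 + t) ^ k * Real.exp (W * t) * Real.exp (-t ^ 2)
      ≤ k.factorial * Real.exp (1 + (1 + W) ^ 2 / 2) * Real.exp (-(1/2) * t ^ 2) := by
  have h1 : (1 + t) ^ k ≤ k.factorial * Real.exp (1 + t) := by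
    have := Real.pow_div_factorial_le_exp (1 + t) (by linarith) k
    rwa [div_le_iff₀ (by positivity), mul_comm] at this
  calc _ ≤ k.factorial * Real.exp (1 + t) * Real.exp (W * t) * Real.exp (-t ^ 2) := by gcongr
    _ = k.factorial * Real.exp (1 + t + W * t + -t ^ 2) := by
      simp only [Real.exp_add]; ring
    _ ≤ k.factorial * Real.exp (1 + (1 + W) ^ 2 / 2 + -(1/2) * t ^ 2) := by
      have : 1 + t + W * t + -t ^ 2 ≤ 1 + (1 + W) ^ 2 / 2 + -(1/2) * t ^ 2 := by
        nlinarith [sq_nonneg (1 + W - t)]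
      gcongr
    _ = _ := by rw [Real.exp_add]; ring

lemma F2_integrable {n : ℕ} {g : En n → ℂ} (hg : DifferentiableOn ℂ g (Bl n)) (k : ℕ)
    (w : En n) : Integrable fun ξ : En n =>
      hp g k ξ * Complex.exp ((starRingEnd ℂ) (inner ℂ w ξ)) * (Real.exp (-‖ξ‖ ^ 2) : ℂ) := by
  obtain ⟨C, hC0, hC⟩ := hp_bound hg k
  have hdom := (gauss_integrable n (1/2) (by norm_num)).const_mul
    (C * (k.factorial * Real.exp (1 + (1 + ‖w‖) ^ 2 / 2)))
  refine hdom.mono' (Continuous.aestronglyMeasurable ?_) (Eventually.of_forall fun ξ => ?_)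
  · have := hp_continuous hg k
    have h2 : Continuous fun ξ : En n => (starRingEnd ℂ) (inner ℂ w ξ) :=
      Complex.continuous_conj.comp (by fun_prop)
    fun_prop
  · rw [norm_mul, norm_mul, Complex.norm_real, Real.norm_of_nonneg (Real.exp_pos _).le,
      Complex.norm_exp, Complex.conj_re]
    have h1 : (inner ℂ w ξ).re ≤ ‖w‖ * ‖ξ‖ :=
      (Complex.re_le_norm _).trans (norm_inner_le_norm w ξ)
    calc _ ≤ (C * (1 + ‖ξ‖) ^ k) * Real.exp (‖w‖ * ‖ξ‖) * Real.exp (-‖ξ‖ ^ 2) := by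
          gcongr; exact hC ξ
      _ = C * ((1 + ‖ξ‖) ^ k * Real.exp (‖w‖ * ‖ξ‖) * Real.exp (-‖ξ‖ ^ 2)) := by ring
      _ ≤ C * (k.factorial * Real.exp (1 + (1 + ‖w‖) ^ 2 / 2) * Real.exp (-(1/2) * ‖ξ‖ ^ 2)) := by
          exact mul_le_mul_of_nonneg_left (gauss_dom _ _ _ (norm_nonneg ξ)) (by positivity)
      _ = _ := by ring

/-- The reproducing identity of the Fock space, restricted to homogeneous polynomials of
degree `k`. -/
lemma gauss_hp {n : ℕ} {g : En n → ℂ} (hg : DifferentiableOn ℂ g (Bl n)) (k : ℕ) (w : En n) :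
    ∫ ξ : En n, (hp g k ξ * (starRingEnd ℂ) (inner ℂ w ξ) ^ k) * (Real.exp (-‖ξ‖ ^ 2) : ℂ)
      = k.factorial * (g0 n : ℂ) * hp g k w := by
  have hpi := Real.pi_pos
  have hpic : (Real.pi : ℂ) ≠ 0 := by exact_mod_cast hpi.ne'
  have hfac : (k.factorial : ℂ) ≠ 0 := by exact_mod_cast k.factorial_ne_zero
  set F2 : En n → ℂ := fun ξ =>
      hp g k ξ * Complex.exp ((starRingEnd ℂ) (inner ℂ w ξ)) * (Real.exp (-‖ξ‖ ^ 2) : ℂ) with hF2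
  have hI : Integrable F2 := F2_integrable hg k w
  have hI1 : Integrable fun ξ => F2 (ξ + w) := hI.comp_add_right w
  have hnr : ∀ (θ : ℝ) (ξ : En n), ‖ee θ • ξ‖ = ‖ξ‖ := fun θ ξ => by
    rw [norm_smul, norm_ee, one_mul]
  have e1 : ∫ ξ, F2 (ξ + w) = (g0 n : ℂ) * hp g k w := by
    rw [rot_average n _ hI1]
    have hF1 : ∀ ξ : En n, F2 (ξ + w) =
        hp g k (ξ + w) * Complex.exp (-(inner ℂ w ξ)) * (Real.exp (-‖ξ‖ ^ 2) : ℂ) := by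
      intro ξ
      simp only [hF2]
      rw [mul_assoc, mul_assoc]
      congr 1
      rw [Complex.ofReal_exp, Complex.ofReal_exp, ← Complex.exp_add, ← Complex.exp_add]
      congr 1
      have hre : (inner ℂ ξ w).re = (inner ℂ w ξ).re := by
        rw [← inner_conj_symm, Complex.conj_re]
      have him : (inner ℂ ξ w).im = -(inner ℂ w ξ).im := by
        rw [← inner_conj_symm, Complex.conj_im]
      have hn2 : ‖ξ + w‖ ^ 2 = ‖ξ‖ ^ 2 + 2 * (inner ℂ w ξ).re + ‖w‖ ^ 2 := by
        rw [norm_add_sq (𝕜 := ℂ)]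
        simp [hre]
      rw [hn2, inner_add_right, map_add, inner_self_eq_norm_sq_to_K]
      apply Complex.ext <;> simp [← Complex.ofReal_pow, hre, him] <;> ring
    have : ∀ ξ : En n, ((2 * Real.pi)⁻¹ : ℝ) • ∫ θ in (0:ℝ)..(2 * Real.pi), F2 (ee θ • ξ + w)
        = (Real.exp (-‖ξ‖ ^ 2) : ℂ) * hp g k w := by
      intro ξ
      simp_rw [hF1, hnr, inner_smul_right]
      rw [intervalIntegral.integral_mul_const, Complex.real_smul, ← mul_assoc]
      rw [Complex.ofReal_inv, hp_mean hg k ξ w (inner ℂ w ξ), mul_comm]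
    simp_rw [this]
    rw [integral_mul_const, g0, integral_complex_ofReal]
  have e2 : ∫ ξ, F2 ξ = (k.factorial : ℂ)⁻¹ * ∫ ξ : En n,
      (hp g k ξ * (starRingEnd ℂ) (inner ℂ w ξ) ^ k) * (Real.exp (-‖ξ‖ ^ 2) : ℂ) := by
    rw [rot_average n _ hI, ← integral_const_mul]
    congr 1
    funext ξ
    have : ∀ θ, F2 (ee θ • ξ) = hp g k ξ * (Real.exp (-‖ξ‖ ^ 2) : ℂ) *
        (ee θ ^ k * Complex.exp ((starRingEnd ℂ) (ee θ) * (starRingEnd ℂ) (inner ℂ w ξ))) := by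
      intro θ
      simp only [hF2, hnr, inner_smul_right, hp_rot, map_mul]
      ring
    simp_rw [this]
    rw [intervalIntegral.integral_const_mul, circle_exp, Complex.real_smul]
    push_cast
    field_simp
  rw [integral_add_right_eq_self, e2] at e1
  rw [mul_assoc, ← e1, mul_inv_cancel_left₀ hfac]

lemma radial_gauss (n k : ℕ) (hn : 1 ≤ n) :
    ∫ r in Set.Ioi (0:ℝ), r ^ (2 * k + 2 * n - 1) * Real.exp (-r ^ 2)
      = ((k + n - 1).factorial : ℝ) / 2 := by
  have h := integral_rpow_mul_exp_neg_rpow (p := 2) (q := ((2 * k + 2 * n - 1 : ℕ) : ℝ))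
    (by norm_num) (by have := Nat.cast_nonneg (α := ℝ) (2 * k + 2 * n - 1); linarith)
  have h2 : (((2 * k + 2 * n - 1 : ℕ) : ℝ) + 1) / 2 = ((k + n - 1 : ℕ) : ℝ) + 1 := by
    rw [Nat.cast_sub (by omega), Nat.cast_sub (by omega)]; push_cast; ring
  rw [h2, Real.Gamma_nat_eq_factorial] at h
  rw [← one_div_mul_eq_div, ← h]
  refine setIntegral_congr_fun measurableSet_Ioi fun r hr => ?_
  simp only [Real.rpow_natCast, Real.rpow_two]

/-! ### Moments of the weight and the expansion of the kernel -/

/-- The moments of the weight. -/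
def mom (ω : ℝ → ℝ) (N : ℕ) : ℝ := ∫ r in Set.Ioo (0:ℝ) 1, r ^ N * ω r

/-- The weight extended by zero to the real line. -/
def wi (ω : ℝ → ℝ) : ℝ → ℝ := (Set.Ico (0:ℝ) 1).indicator ω

lemma wi_meas {ω : ℝ → ℝ} (hω : IsWeight ω) : Measurable (wi ω) :=
  hω.2.1.indicator measurableSet_Ico

lemma wi_nonneg {ω : ℝ → ℝ} (hω : IsWeight ω) (r : ℝ) : 0 ≤ wi ω r :=
  Set.indicator_nonneg hω.1 r

lemma wi_int {ω : ℝ → ℝ} (hω : IsWeight ω) : Integrable (wi ω) :=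
  (integrable_indicator_iff measurableSet_Ico).2 hω.2.2

lemma mom_eq_wi (ω : ℝ → ℝ) (N : ℕ) : ∫ r in Set.Ioi (0:ℝ), r ^ N * wi ω r = mom ω N := by
  have h : ∀ r : ℝ, r ^ N * wi ω r = (Set.Ico (0:ℝ) 1).indicator (fun r => r ^ N * ω r) r := by
    intro r; unfold wi; by_cases hr : r ∈ Set.Ico (0:ℝ) 1 <;> simp [hr]
  simp_rw [h]
  rw [setIntegral_indicator measurableSet_Ico, mom]
  congr 2
  ext r; simp only [Set.mem_inter_iff, Set.mem_Ioi, Set.mem_Ico, Set.mem_Ioo]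
  constructor
  · rintro ⟨h1, _, h2⟩; exact ⟨h1, h2⟩
  · rintro ⟨h1, h2⟩; exact ⟨h1, h1.le, h2⟩

lemma pow_mul_int {ω : ℝ → ℝ} (hω : IsWeight ω) (N : ℕ) :
    IntegrableOn (fun r => r ^ N * ω r) (Set.Ioo 0 1) := by
  have h : IntegrableOn ω (Set.Ioo 0 1) := hω.2.2.mono_set Set.Ioo_subset_Ico_self
  refine h.mono' ((measurable_id.pow_const N).mul hω.2.1).aestronglyMeasurable ?_
  refine (ae_restrict_mem measurableSet_Ioo).mono fun r hr => ?_
  have h1 := hω.1 r ⟨hr.1.le, hr.2⟩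
  rw [norm_mul, norm_pow, Real.norm_of_nonneg h1, Real.norm_of_nonneg hr.1.le]
  exact mul_le_of_le_one_left h1 (pow_le_one₀ hr.1.le hr.2.le)

lemma wh_int {ω : ℝ → ℝ} (hω : IsWeight ω) (r : ℝ) (hr : 0 ≤ r) :
    IntegrableOn ω (Set.Ioo r 1) :=
  hω.2.2.mono_set fun _ ht => ⟨hr.trans ht.1.le, ht.2⟩

/-- The moment of order `N` dominates the mass of the weight near the boundary. -/
lemma mom_ge {ω : ℝ → ℝ} (hω : IsWeight ω) (N : ℕ) (r : ℝ) (hr : 0 ≤ r) :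
    r ^ N * wh ω r ≤ mom ω N := by
  rw [wh, ← integral_const_mul, mom]
  have hsub : Set.Ioo r 1 ⊆ Set.Ioo 0 1 := Set.Ioo_subset_Ioo_left hr
  calc _ ≤ ∫ t in Set.Ioo r 1, t ^ N * ω t := by
        refine setIntegral_mono_on ((wh_int hω r hr).const_mul _)
          ((pow_mul_int hω N).mono_set hsub) measurableSet_Ioo fun t ht => ?_
        have := hω.1 t ⟨hr.trans ht.1.le, ht.2⟩
        have := ht.1.le
        gcongr
    _ ≤ _ := by
        refine setIntegral_mono_set (pow_mul_int hω N) ?_ hsub.eventuallyLE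
        refine (ae_restrict_mem measurableSet_Ioo).mono fun t ht => ?_
        exact mul_nonneg (pow_nonneg ht.1.le _) (hω.1 t ⟨ht.1.le, ht.2⟩)

lemma mom_pos {ω : ℝ → ℝ} (hω : IsWeight ω) (hpos : ∀ r ∈ Set.Ico (0:ℝ) 1, 0 < wh ω r) (N : ℕ) :
    0 < mom ω N := by
  refine lt_of_lt_of_le ?_ (mom_ge hω N (1/2) (by norm_num))
  have := hpos (1/2) ⟨by norm_num, by norm_num⟩
  positivity

/-- The volume of the unit ball of `ℂⁿ`. -/
def vb (n : ℕ) : ℝ := (volume (ball (0 : En n) 1)).toReal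

lemma vb_pos (n : ℕ) : 0 < vb n :=
  ENNReal.toReal_pos (measure_ball_pos volume _ one_pos).ne' measure_ball_lt_top.ne

lemma Bl_meas (n : ℕ) : MeasurableSet (Bl n) := isOpen_ball.measurableSet

lemma nV_integral (n : ℕ) (F : En n → ℂ) :
    ∫ ξ in Bl n, F ξ ∂(nV n) = ((vb n : ℂ))⁻¹ * ∫ ξ in Bl n, F ξ := by
  rw [nV, Measure.restrict_smul, integral_smul_measure, ENNReal.toReal_inv, vb, Complex.real_smul]
  push_cast
  rfl

lemma nV_integrable (n : ℕ) {E : Type*} [NormedAddCommGroup E] (F : En n → E) :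
    IntegrableOn F (Bl n) (nV n) ↔ IntegrableOn F (Bl n) := by
  rw [IntegrableOn, IntegrableOn, nV, Measure.restrict_smul]
  exact integrable_smul_measure (ENNReal.inv_ne_zero.2 measure_ball_lt_top.ne)
    (ENNReal.inv_ne_top.2 (measure_ball_pos volume _ one_pos).ne')

lemma weight_ball_int {ω : ℝ → ℝ} (hω : IsWeight ω) (n : ℕ) (hn : 1 ≤ n) :
    IntegrableOn (fun ξ : En n => ω ‖ξ‖) (Bl n) := by
  have : Nontrivial (En n) := by
    have : Nonempty (Fin n) := ⟨⟨0, hn⟩⟩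
    infer_instance
  have h : Integrable (fun ξ : En n => wi ω ‖ξ‖) := by
    rw [integrable_fun_norm_addHaar volume (f := wi ω)]
    have h2 : IntegrableOn (wi ω) (Set.Ioi 0) := (wi_int hω).integrableOn
    refine h2.mono' ?_ ?_
    · exact ((measurable_id.pow_const _).mul (wi_meas hω)).aestronglyMeasurable
    · refine (ae_restrict_mem measurableSet_Ioi).mono fun r (hr : 0 < r) => ?_
      rw [smul_eq_mul, norm_mul, norm_pow, Real.norm_of_nonneg (wi_nonneg hω r),
        Real.norm_of_nonneg hr.le]
      by_cases h1 : r < 1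
      · exact mul_le_of_le_one_left (wi_nonneg hω r) (pow_le_one₀ hr.le h1.le)
      · have : wi ω r = 0 := Set.indicator_of_notMem (fun h => h1 h.2) _
        rw [this, mul_zero]
  refine h.integrableOn.congr_fun (fun ξ hξ => ?_) (Bl_meas n)
  have : ‖ξ‖ < 1 := by simpa [Bl] using hξ
  exact Set.indicator_of_mem (s := Set.Ico (0:ℝ) 1) ⟨norm_nonneg ξ, this⟩ ω

lemma inner_pow_InAp {ω : ℝ → ℝ} (hω : IsWeight ω) (n : ℕ) (hn : 1 ≤ n) (w : En n) (k : ℕ) :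
    InAp n 2 ω (fun ξ => (inner ℂ w ξ) ^ k) := by
  have hcont : Continuous fun ξ : En n => inner ℂ w ξ := by fun_prop
  refine ⟨?_, ?_⟩
  · have : Differentiable ℂ fun ξ : En n => inner ℂ w ξ := (innerSL ℂ w).differentiable
    exact (this.pow k).differentiableOn
  · rw [nV_integrable]
    have h := (weight_ball_int hω n hn).const_mul ((‖w‖ ^ k) ^ (2:ℝ))
    refine h.mono' ?_ ?_
    · refine AEStronglyMeasurable.mul (Continuous.aestronglyMeasurable ?_)
        (hω.2.1.comp measurable_norm).aestronglyMeasurable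
      exact (hcont.pow k).norm.rpow_const fun _ => Or.inr (by norm_num)
    · refine (ae_restrict_mem (Bl_meas n)).mono fun ξ hξ => ?_
      have h1 : ‖ξ‖ < 1 := by simpa [Bl] using hξ
      have h2 := hω.1 ‖ξ‖ ⟨norm_nonneg ξ, h1⟩
      have h3 : ‖inner ℂ w ξ‖ ≤ ‖w‖ := (norm_inner_le_norm w ξ).trans
        (mul_le_of_le_one_right (norm_nonneg w) h1.le)
      rw [norm_mul, Real.norm_of_nonneg h2, norm_pow, Real.norm_of_nonneg (by positivity)]
      gcongr

lemma L1_of_InAp {ω : ℝ → ℝ} (hω : IsWeight ω) (n : ℕ) (hn : 1 ≤ n) (g : En n → ℂ)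
    (hg : InAp n 2 ω g) : IntegrableOn (fun ξ => g ξ * (ω ‖ξ‖ : ℂ)) (Bl n) := by
  have h1 := (nV_integrable n _).1 hg.2
  have h2 := h1.add (weight_ball_int hω n hn)
  refine Integrable.mono' h2 ?_ ?_
  · exact (hg.1.continuousOn.aestronglyMeasurable (Bl_meas n)).mul
      (Complex.measurable_ofReal.comp (hω.2.1.comp measurable_norm)).aestronglyMeasurable
  · refine (ae_restrict_mem (Bl_meas n)).mono fun ξ hξ => ?_
    have h1 : ‖ξ‖ < 1 := by simpa [Bl] using hξ
    have h2 := hω.1 ‖ξ‖ ⟨norm_nonneg ξ, h1⟩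
    simp only [Pi.add_apply, Real.rpow_two]
    rw [norm_mul, Complex.norm_real, Real.norm_of_nonneg h2]
    nlinarith [sq_nonneg (‖g ξ‖ - 1), norm_nonneg (g ξ),
      mul_nonneg h2 (sq_nonneg (‖g ξ‖ - 1)), mul_nonneg h2 (norm_nonneg (g ξ))]

/-- The Taylor coefficients of the kernel as a function of `⟨ξ, z⟩`. -/
def cf (n : ℕ) (ω : ℝ → ℝ) (k : ℕ) : ℝ :=
  vb n / (2 * g0 n) * ((k + n - 1).factorial / k.factorial) / mom ω (2 * k + 2 * n - 1)

/-- The degree `k` component of `B z` is `cf n ω k * ⟨w, z⟩ ^ k`: in polar coordinates the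
Gaussian identity `gauss_hp` and the reproducing formula for `ω`, tested on the `k`-th power of
`⟨·, w⟩`, involve the same sphere integral and differ only by radial factors. -/
lemma kernel_hp {n : ℕ} (hn : 1 ≤ n) {ω : ℝ → ℝ} (hω : IsWeight ω)
    (hpos : ∀ r ∈ Set.Ico (0:ℝ) 1, 0 < wh ω r) {B : En n → En n → ℂ} (hB : IsRepKernel n ω B)
    {z : En n} (hz : z ∈ Bl n) (k : ℕ) (w : En n) :
    hp (B z) k w = (cf n ω k : ℂ) * (inner ℂ z w) ^ k := by
  have hg := (hB.1 z hz).1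
  have hpi := Real.pi_pos
  set g := B z
  have hhom : ∀ (t : ℝ) (ξ : En n), 0 < t →
      hp g k ((t:ℂ) • ξ) * (starRingEnd ℂ) (inner ℂ w ((t:ℂ) • ξ)) ^ k
        = (t:ℂ) ^ (2 * k) * (hp g k ξ * (starRingEnd ℂ) (inner ℂ w ξ) ^ k) := by
    intro t ξ ht
    rw [hp_real_smul hg k ξ t ht, inner_smul_right, map_mul, Complex.conj_ofReal]
    ring
  set S := ∫ σ : sphere (0 : En n) 1, hp g k σ * (starRingEnd ℂ) (inner ℂ w (σ : En n)) ^ k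
    ∂(volume : Measure (En n)).toSphere with hS
  have e1 := gauss_hp hg k w
  rw [polar_integral n (2 * k) hn _ hhom (fun r => Real.exp (-r ^ 2)), radial_gauss n k hn] at e1
  -- the reproducing formula applied to a power of a linear functional, conjugated
  have e2 := hB.2 _ (inner_pow_InAp hω n hn w k) z hz
  rw [nV_integral] at e2
  have e3 : (inner ℂ z w) ^ k = ((vb n : ℂ))⁻¹ *
      ∫ ξ in Bl n, (starRingEnd ℂ) (inner ℂ w ξ) ^ k * (g ξ * (ω ‖ξ‖ : ℂ)) := by
    have := congrArg (starRingEnd ℂ) e2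
    simp only [map_pow, map_mul, map_inv₀, Complex.conj_ofReal, inner_conj_symm] at this
    rw [this, ← integral_conj]
    congr 2
    funext ξ
    simp only [map_pow, map_mul, Complex.conj_ofReal, Complex.conj_conj]
    ring
  set G : En n → ℂ := (Bl n).indicator
    (fun ξ => (starRingEnd ℂ) (inner ℂ w ξ) ^ k * (g ξ * (ω ‖ξ‖ : ℂ))) with hG
  have hGint : Integrable G := by
    rw [hG, integrable_indicator_iff (Bl_meas n)]
    have h2 : Continuous fun ξ : En n => (starRingEnd ℂ) (inner ℂ w ξ) ^ k :=
      (Complex.continuous_conj.comp (by fun_prop)).pow k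
    refine (L1_of_InAp hω n hn g (hB.1 z hz)).bdd_mul (c := ‖w‖ ^ k) h2.aestronglyMeasurable ?_
    refine (ae_restrict_mem (Bl_meas n)).mono fun ξ hξ => ?_
    have h1 : ‖ξ‖ < 1 := by simpa [Bl] using hξ
    have h3 : ‖inner ℂ w ξ‖ ≤ ‖w‖ := (norm_inner_le_norm w ξ).trans
      (mul_le_of_le_one_right (norm_nonneg w) h1.le)
    rw [norm_pow, RCLike.norm_conj]
    gcongr
  have e4 : ∫ ξ in Bl n, (starRingEnd ℂ) (inner ℂ w ξ) ^ k * (g ξ * (ω ‖ξ‖ : ℂ))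
      = S * (mom ω (2 * k + 2 * n - 1) : ℂ) := by
    rw [← integral_indicator (Bl_meas n), ← hG, rot_average n G hGint, ← mom_eq_wi,
      hS, ← polar_integral n (2 * k) hn
        (fun ξ => hp g k ξ * (starRingEnd ℂ) (inner ℂ w ξ) ^ k) hhom (wi ω)]
    congr 1
    funext ξ
    by_cases hξ : ‖ξ‖ < 1
    · have hG2 : ∀ θ, G (ee θ • ξ) = ((starRingEnd ℂ) (inner ℂ w ξ) ^ k * (ω ‖ξ‖ : ℂ)) *
          ((starRingEnd ℂ) (ee θ) ^ k * g ((((1:ℝ):ℂ) * ee θ) • ξ)) := by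
        intro θ
        have hmem : ee θ • ξ ∈ Bl n := by
          rw [Bl, mem_ball, dist_zero_right, norm_smul, norm_ee, one_mul]; exact hξ
        rw [hG, Set.indicator_of_mem hmem, inner_smul_right, norm_smul, norm_ee, one_mul, map_mul,
          Complex.ofReal_one, one_mul]
        ring
      simp_rw [hG2]
      rw [hp_eq hg k ξ 1 one_pos (by rwa [one_mul]), intervalIntegral.integral_const_mul]
      have : wi ω ‖ξ‖ = ω ‖ξ‖ :=
        Set.indicator_of_mem (s := Set.Ico (0:ℝ) 1) ⟨norm_nonneg ξ, hξ⟩ ω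
      rw [this, Complex.real_smul]
      push_cast
      simp only [one_pow, inv_one, one_mul]
      ring
    · have hG2 : ∀ θ, G (ee θ • ξ) = 0 := by
        intro θ
        refine Set.indicator_of_notMem (fun h => hξ ?_) _
        rwa [Bl, mem_ball, dist_zero_right, norm_smul, norm_ee, one_mul] at h
      simp_rw [hG2]
      have : wi ω ‖ξ‖ = 0 := Set.indicator_of_notMem (fun h => hξ h.2) _
      rw [this]; simp
  rw [e4] at e3
  have hm := mom_pos hω hpos (2 * k + 2 * n - 1)
  have h1 : (mom ω (2 * k + 2 * n - 1) : ℂ) ≠ 0 := by exact_mod_cast hm.ne'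
  have h2 : (vb n : ℂ) ≠ 0 := by exact_mod_cast (vb_pos n).ne'
  have h3 : (g0 n : ℂ) ≠ 0 := by exact_mod_cast (g0_pos n).ne'
  have h4 : (k.factorial : ℂ) ≠ 0 := by exact_mod_cast k.factorial_ne_zero
  rw [e3, cf]
  push_cast at e1 ⊢
  field_simp
  linear_combination -2 * e1

/-- The kernel is the sum of its homogeneous components. -/
lemma kernel_hasSum {n : ℕ} (hn : 1 ≤ n) {ω : ℝ → ℝ} (hω : IsWeight ω)
    (hpos : ∀ r ∈ Set.Ico (0:ℝ) 1, 0 < wh ω r) {B : En n → En n → ℂ} (hB : IsRepKernel n ω B)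
    {z ξ : En n} (hz : z ∈ Bl n) (hξ : ξ ∈ Bl n) :
    HasSum (fun k => (cf n ω k : ℂ) * (inner ℂ z ξ) ^ k) (B z ξ) := by
  have := hp_hasSum (hB.1 z hz).1 ξ hξ
  simp_rw [kernel_hp hn hω hpos hB hz] at this
  exact this

/-- The sphere moments of a linear functional, in the form of a comparison of radial integrals. -/
lemma inner_moment {n : ℕ} (hn : 1 ≤ n) (w : En n) (m : ℕ) (Φ : ℝ → ENNReal) (hΦ : Measurable Φ) :
    ∫⁻ ξ : En n, ENNReal.ofReal (‖inner ℂ w ξ‖ ^ (2 * m)) * Φ ‖ξ‖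
      = ENNReal.ofReal (2 * g0 n * (m.factorial / (m + n - 1).factorial) * ‖w‖ ^ (2 * m))
        * ∫⁻ r in Set.Ioi (0:ℝ), ENNReal.ofReal (r ^ (2 * m + 2 * n - 1)) * Φ r := by
  have hcont : Continuous fun ξ : En n => inner ℂ w ξ := by fun_prop
  have hdiff : Differentiable ℂ fun ξ : En n => (inner ℂ w ξ) ^ m :=
    (innerSL ℂ w).differentiable.pow m
  have hmeas : Measurable fun ξ : En n => ENNReal.ofReal (‖inner ℂ w ξ‖ ^ (2 * m)) :=
    (ENNReal.continuous_ofReal.comp (hcont.norm.pow _)).measurable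
  have hhom : ∀ (t : ℝ) (ξ : En n), 0 < t →
      ENNReal.ofReal (‖inner ℂ w ((t:ℂ) • ξ)‖ ^ (2 * m))
        = ENNReal.ofReal (t ^ (2 * m)) * ENNReal.ofReal (‖inner ℂ w ξ‖ ^ (2 * m)) := by
    intro t ξ ht
    rw [← ENNReal.ofReal_mul (by positivity), inner_smul_right, norm_mul, mul_pow,
      Complex.norm_real, Real.norm_of_nonneg ht.le]
  have hpm : ∀ ξ : En n, hp (fun ξ : En n => (inner ℂ w ξ) ^ m) m ξ = (inner ℂ w ξ) ^ m := by
    intro ξ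
    have h0 := norm_nonneg ξ
    have hr : (0:ℝ) < (1 + ‖ξ‖)⁻¹ := by positivity
    rw [hp_eq hdiff.differentiableOn m ξ (1 + ‖ξ‖)⁻¹ hr
      (by rw [inv_mul_lt_iff₀ (by positivity)]; linarith)]
    have hrc : (((1 + ‖ξ‖)⁻¹ : ℝ) : ℂ) ≠ 0 := by exact_mod_cast hr.ne'
    have : ∀ θ, (starRingEnd ℂ) (ee θ) ^ m * (inner ℂ w (((((1 + ‖ξ‖)⁻¹ : ℝ) : ℂ) * ee θ) • ξ)) ^ m
        = (((1 + ‖ξ‖)⁻¹ : ℝ) : ℂ) ^ m * (inner ℂ w ξ) ^ m := by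
      intro θ
      rw [inner_smul_right, mul_pow, mul_pow]
      have : ee θ ^ m * ((starRingEnd ℂ) (ee θ)) ^ m = 1 := by
        rw [← mul_pow, ee_mul_conj, one_pow]
      linear_combination ((((1 + ‖ξ‖)⁻¹ : ℝ) : ℂ) ^ m * (inner ℂ w ξ) ^ m) * this
    simp_rw [this]
    rw [intervalIntegral.integral_const, Complex.real_smul, sub_zero]
    have h2 : ((2 * Real.pi : ℝ) : ℂ) ≠ 0 := by
      exact_mod_cast (by have := Real.pi_pos; positivity : (2 * Real.pi) ≠ 0)
    rw [inv_mul_cancel_left₀ h2, inv_mul_cancel_left₀ (pow_ne_zero m hrc)]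
  have e1 := gauss_hp hdiff.differentiableOn m w
  simp_rw [hpm] at e1
  have hintg : Integrable fun ξ : En n => ‖inner ℂ w ξ‖ ^ (2 * m) * Real.exp (-‖ξ‖ ^ 2) := by
    have hdom := (gauss_integrable n (1/2) (by norm_num)).const_mul
      (‖w‖ ^ (2 * m) * ((2 * m).factorial * Real.exp (1 + (1 + 0) ^ 2 / 2)))
    refine hdom.mono' (Continuous.aestronglyMeasurable (by fun_prop))
      (Eventually.of_forall fun ξ => ?_)
    rw [Real.norm_of_nonneg (by positivity)]
    have h1 : ‖inner ℂ w ξ‖ ≤ ‖w‖ * (1 + ‖ξ‖) := (norm_inner_le_norm w ξ).trans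
      (by gcongr; linarith)
    calc _ ≤ (‖w‖ * (1 + ‖ξ‖)) ^ (2 * m) * Real.exp (-‖ξ‖ ^ 2) := by gcongr
      _ = ‖w‖ ^ (2 * m) * ((1 + ‖ξ‖) ^ (2 * m) * Real.exp (0 * ‖ξ‖) * Real.exp (-‖ξ‖ ^ 2)) := by
        rw [mul_pow, zero_mul, Real.exp_zero]; ring
      _ ≤ ‖w‖ ^ (2 * m) * ((2 * m).factorial * Real.exp (1 + (1 + 0) ^ 2 / 2)
          * Real.exp (-(1/2) * ‖ξ‖ ^ 2)) := by
        exact mul_le_mul_of_nonneg_left (gauss_dom _ _ _ (norm_nonneg ξ)) (by positivity)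
      _ = _ := by ring
  have e2 : ∫ ξ : En n, ‖inner ℂ w ξ‖ ^ (2 * m) * Real.exp (-‖ξ‖ ^ 2)
      = m.factorial * g0 n * ‖w‖ ^ (2 * m) := by
    have h1 : ∀ ξ : En n, (inner ℂ w ξ) ^ m * (starRingEnd ℂ) (inner ℂ w ξ) ^ m
        = ((‖inner ℂ w ξ‖ ^ (2 * m) : ℝ) : ℂ) := by
      intro ξ
      rw [← mul_pow, Complex.mul_conj, Complex.normSq_eq_norm_sq, pow_mul]
      push_cast; rfl
    have h2 : (inner ℂ w w : ℂ) ^ m = ((‖w‖ ^ (2 * m) : ℝ) : ℂ) := by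
      rw [inner_self_eq_norm_sq_to_K, pow_mul]; push_cast; rfl
    simp_rw [h1] at e1
    rw [h2] at e1
    simp_rw [← Complex.ofReal_mul] at e1
    rw [integral_complex_ofReal] at e1
    exact_mod_cast e1
  have e3 := polar_lintegral n (2 * m) hn _ hmeas hhom
    (fun r => ENNReal.ofReal (Real.exp (-r ^ 2))) (by fun_prop)
  have e4 : ∫⁻ r in Set.Ioi (0:ℝ), ENNReal.ofReal (r ^ (2 * m + 2 * n - 1)) *
      ENNReal.ofReal (Real.exp (-r ^ 2)) = ENNReal.ofReal (((m + n - 1).factorial : ℝ) / 2) := by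
    rw [← radial_gauss n m hn, ofReal_integral_eq_lintegral_ofReal]
    · refine setLIntegral_congr_fun measurableSet_Ioi fun r (hr : 0 < r) => ?_
      exact (ENNReal.ofReal_mul (by positivity)).symm
    · by_contra hni
      have := radial_gauss n m hn
      rw [integral_undef hni] at this
      have : (0:ℝ) < ((m + n - 1).factorial : ℝ) / 2 := by positivity
      linarith
    · refine (ae_restrict_mem measurableSet_Ioi).mono fun r (hr : 0 < r) => ?_
      show 0 ≤ _
      positivity
  have e5 : ∫⁻ ξ : En n, ENNReal.ofReal (‖inner ℂ w ξ‖ ^ (2 * m)) *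
      ENNReal.ofReal (Real.exp (-‖ξ‖ ^ 2))
      = ENNReal.ofReal (m.factorial * g0 n * ‖w‖ ^ (2 * m)) := by
    rw [← e2, ofReal_integral_eq_lintegral_ofReal hintg
      (Eventually.of_forall fun ξ => by show 0 ≤ _; positivity)]
    refine lintegral_congr fun ξ => (ENNReal.ofReal_mul (by positivity)).symm
  rw [e5, e4] at e3
  rw [polar_lintegral n (2 * m) hn _ hmeas hhom Φ hΦ]
  congr 1
  have hF : (0:ℝ) < ((m + n - 1).factorial : ℝ) / 2 := by positivity
  have hg := g0_pos n
  rw [← ENNReal.mul_left_inj (ENNReal.ofReal_pos.2 hF).ne' ENNReal.ofReal_ne_top, ← e3,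
    ← ENNReal.ofReal_mul (by positivity)]
  congr 1
  field_simp

/-! ### Doubling of moments and the layer-cake estimate -/

/-- The tail integral of the weight extended by zero; it agrees with `wh ω` on `[0,1)` and is
monotone on all of `ℝ`. -/
def whi (ω : ℝ → ℝ) (r : ℝ) : ℝ := ∫ t in Set.Ioi r, wi ω t

lemma whi_eq (ω : ℝ → ℝ) (r : ℝ) (hr : 0 ≤ r) : whi ω r = wh ω r := by
  unfold whi wi wh
  rw [setIntegral_indicator measurableSet_Ico]
  congr 2
  ext t; simp only [Set.mem_inter_iff, Set.mem_Ioi, Set.mem_Ico, Set.mem_Ioo]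
  constructor
  · rintro ⟨h1, _, h2⟩; exact ⟨h1, h2⟩
  · rintro ⟨h1, h2⟩; exact ⟨h1, hr.trans h1.le, h2⟩

lemma whi_anti {ω : ℝ → ℝ} (hω : IsWeight ω) : Antitone (whi ω) := fun _ _ h =>
  setIntegral_mono_set (wi_int hω).integrableOn (Eventually.of_forall (wi_nonneg hω))
    (Set.Ioi_subset_Ioi h).eventuallyLE

lemma wh_anti {ω : ℝ → ℝ} (hω : IsWeight ω) {r s : ℝ} (hr : 0 ≤ r) (hrs : r ≤ s) :
    wh ω s ≤ wh ω r := by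
  rw [← whi_eq ω r hr, ← whi_eq ω s (hr.trans hrs)]
  exact whi_anti hω hrs

/-- The measure `r ^ N ω(r) dr` on `(0,1)`. -/
def mw (ω : ℝ → ℝ) (N : ℕ) : Measure ℝ :=
  (volume.restrict (Set.Ioo (0:ℝ) 1)).withDensity fun r => ENNReal.ofReal (r ^ N * ω r)

lemma mw_lintegral {ω : ℝ → ℝ} (hω : IsWeight ω) (N : ℕ) {F : ℝ → ENNReal} (hF : Measurable F) :
    ∫⁻ r, F r ∂(mw ω N) = ∫⁻ r in Set.Ioo (0:ℝ) 1, ENNReal.ofReal (r ^ N * ω r) * F r := by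
  rw [mw, lintegral_withDensity_eq_lintegral_mul _ _ hF]
  · rfl
  · exact ((measurable_id.pow_const N).mul hω.2.1).ennreal_ofReal

lemma pow_ofReal_int {ω : ℝ → ℝ} (hω : IsWeight ω) (N : ℕ) :
    ∫⁻ r in Set.Ioo (0:ℝ) 1, ENNReal.ofReal (r ^ N * ω r) = ENNReal.ofReal (mom ω N) := by
  rw [mom, ofReal_integral_eq_lintegral_ofReal (pow_mul_int hω N)]
  refine (ae_restrict_mem measurableSet_Ioo).mono fun r hr => ?_
  exact mul_nonneg (pow_nonneg hr.1.le _) (hω.1 r ⟨hr.1.le, hr.2⟩)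

lemma mw_univ {ω : ℝ → ℝ} (hω : IsWeight ω) (N : ℕ) :
    mw ω N Set.univ = ENNReal.ofReal (mom ω N) := by
  rw [← lintegral_one, mw_lintegral hω N measurable_const]
  simp only [mul_one]
  exact pow_ofReal_int hω N

lemma mw_Ioi {ω : ℝ → ℝ} (hω : IsWeight ω) (t : ℝ) (ht : 0 ≤ t) :
    mw ω 0 (Set.Ioi t) = ENNReal.ofReal (wh ω t) := by
  rw [mw, withDensity_apply _ measurableSet_Ioi, Measure.restrict_restrict measurableSet_Ioi]
  have : Set.Ioi t ∩ Set.Ioo 0 1 = Set.Ioo t 1 := by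
    ext s; simp only [Set.mem_inter_iff, Set.mem_Ioi, Set.mem_Ioo]
    constructor
    · rintro ⟨h1, _, h2⟩; exact ⟨h1, h2⟩
    · rintro ⟨h1, h2⟩; exact ⟨h1, ht.trans_lt h1, h2⟩
  rw [this, wh, ofReal_integral_eq_lintegral_ofReal (wh_int hω t ht)]
  · simp only [pow_zero, one_mul]
  · refine (ae_restrict_mem measurableSet_Ioo).mono fun r hr => ?_
    exact hω.1 r ⟨ht.trans hr.1.le, hr.2⟩

lemma mw_le {ω : ℝ → ℝ} (hω : IsWeight ω) (N : ℕ) (s : Set ℝ) (hs : MeasurableSet s) :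
    mw ω N s ≤ mw ω 0 s := by
  rw [mw, mw, withDensity_apply _ hs, withDensity_apply _ hs,
    Measure.restrict_restrict hs]
  refine setLIntegral_mono (((measurable_id.pow_const 0).mul hω.2.1).ennreal_ofReal) fun r hr => ?_
  have h := hω.1 r ⟨hr.2.1.le, hr.2.2⟩
  have : r ^ N ≤ 1 := pow_le_one₀ hr.2.1.le hr.2.2.le
  rw [pow_zero]
  gcongr

lemma mw_ac (ω : ℝ → ℝ) (N : ℕ) : mw ω N ≪ volume :=
  (withDensity_absolutelyContinuous _ _).trans Measure.absolutelyContinuous_restrict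

lemma mw_singleton (ω : ℝ → ℝ) (N : ℕ) (x : ℝ) : mw ω N {x} = 0 := mw_ac ω N (by simp)

lemma mw_Ici {ω : ℝ → ℝ} (hω : IsWeight ω) (t : ℝ) (ht : 0 ≤ t) :
    mw ω 0 (Set.Ici t) = ENNReal.ofReal (wh ω t) := by
  rw [← mw_Ioi hω t ht]
  refine le_antisymm ?_ (measure_mono Set.Ioi_subset_Ici_self)
  rw [← Set.Ioi_insert, Set.insert_eq]
  refine (measure_union_le _ _).trans ?_
  rw [mw_singleton, zero_add]

lemma mw_ae_mem (ω : ℝ → ℝ) (N : ℕ) : ∀ᵐ r ∂(mw ω N), r ∈ Set.Ioo (0:ℝ) 1 :=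
  (withDensity_absolutelyContinuous _ _).ae_le (ae_restrict_mem measurableSet_Ioo)

lemma mom_anti {ω : ℝ → ℝ} (hω : IsWeight ω) : Antitone (mom ω) := by
  intro M N h
  refine setIntegral_mono_on (pow_mul_int hω N) (pow_mul_int hω M) measurableSet_Ioo fun r hr => ?_
  have := hω.1 r ⟨hr.1.le, hr.2⟩
  exact mul_le_mul_of_nonneg_right (pow_le_pow_of_le_one hr.1.le hr.2.le h) this

/-- Moments of a weight in `Dhat` are doubling: the tails at `t` and `(1 + t) / 2` are comparable,
the latter is the distribution function of `2 r - 1`, and `2 r - 1 ≤ r ^ 2`. -/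
lemma mom_double {ω : ℝ → ℝ} (hω : IsWeight ω) {C : ℝ} (hC1 : 1 ≤ C)
    (hC : ∀ r ∈ Set.Ico (0:ℝ) 1, wh ω r ≤ C * wh ω ((1 + r) / 2)) (N : ℕ) (hN : 1 ≤ N) :
    mom ω N ≤ C * mom ω (2 * N) := by
  have hN0 : (0:ℝ) < N := by exact_mod_cast hN
  have hmom0 : ∀ N, 0 ≤ mom ω N := fun N =>
    setIntegral_nonneg measurableSet_Ioo fun r hr =>
      mul_nonneg (pow_nonneg hr.1.le _) (hω.1 r ⟨hr.1.le, hr.2⟩)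
  have hmono : ∀ N : ℕ, ∫⁻ r, ENNReal.ofReal (r ^ N) ∂(mw ω 0) = ENNReal.ofReal (mom ω N) := by
    intro N
    rw [mw_lintegral hω 0 (by fun_prop), ← pow_ofReal_int hω N]
    refine setLIntegral_congr_fun measurableSet_Ioo fun r hr => ?_
    have := hω.1 r ⟨hr.1.le, hr.2⟩
    simp only [pow_zero, one_mul]
    rw [← ENNReal.ofReal_mul this, mul_comm]
  have hA := lintegral_rpow_eq_lintegral_meas_le_mul (mw ω 0) (f := fun r => r)
    ((mw_ae_mem ω 0).mono fun r hr => hr.1.le) aemeasurable_id hN0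
  have hB := lintegral_rpow_eq_lintegral_meas_le_mul (mw ω 0) (f := fun r => max (2 * r - 1) 0)
    (Eventually.of_forall fun r => le_max_right _ _) (by fun_prop) hN0
  simp only [Real.rpow_natCast] at hA hB
  rw [hmono] at hA
  have hle : ENNReal.ofReal (mom ω N) ≤ ENNReal.ofReal C *
      ∫⁻ r, ENNReal.ofReal ((max (2 * r - 1) 0) ^ N) ∂(mw ω 0) := by
    rw [hA, hB, mul_left_comm]
    gcongr
    rw [← lintegral_const_mul' _ _ ENNReal.ofReal_ne_top]
    refine setLIntegral_mono' measurableSet_Ioi fun t (ht : 0 < t) => ?_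
    rw [← mul_assoc]
    gcongr
    have h1 : {a : ℝ | t ≤ max (2 * a - 1) 0} = Set.Ici ((1 + t) / 2) := by
      ext a
      simp only [Set.mem_ofPred_eq, Set.mem_Ici, le_max_iff]
      constructor
      · rintro (h | h) <;> linarith
      · intro h; left; linarith
    have h2 : {a : ℝ | t ≤ a} = Set.Ici t := rfl
    rw [h1, h2, mw_Ici hω _ ht.le, mw_Ici hω _ (by linarith), ← ENNReal.ofReal_mul (by linarith)]
    by_cases ht1 : t < 1
    · exact ENNReal.ofReal_le_ofReal (hC t ⟨ht.le, ht1⟩)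
    · have : wh ω t = 0 := by rw [wh, Set.Ioo_eq_empty (by linarith)]; simp
      rw [this]; simp
  have h2 : ∫⁻ r, ENNReal.ofReal ((max (2 * r - 1) 0) ^ N) ∂(mw ω 0)
      ≤ ENNReal.ofReal (mom ω (2 * N)) := by
    rw [← hmono]
    refine lintegral_mono fun r => ENNReal.ofReal_le_ofReal ?_
    rw [pow_mul]
    gcongr
    refine max_le ?_ (sq_nonneg r)
    nlinarith [sq_nonneg (r - 1)]
  have h3 := hle.trans (mul_le_mul_right h2 _)
  rw [← ENNReal.ofReal_mul (by linarith)] at h3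
  exact (ENNReal.ofReal_le_ofReal_iff (mul_nonneg (by linarith) (hmom0 _))).1 h3

lemma mom_double_iter {ω : ℝ → ℝ} (hω : IsWeight ω) {C : ℝ} (hC1 : 1 ≤ C)
    (hC : ∀ r ∈ Set.Ico (0:ℝ) 1, wh ω r ≤ C * wh ω ((1 + r) / 2)) (N : ℕ) (hN : 1 ≤ N) (i : ℕ) :
    mom ω N ≤ C ^ i * mom ω (2 ^ i * N) := by
  induction i with
  | zero => simp
  | succ i ih =>
    have := mom_double hω hC1 hC (2 ^ i * N) (Nat.mul_pos (by positivity) hN)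
    calc _ ≤ C ^ i * mom ω (2 ^ i * N) := ih
      _ ≤ C ^ i * (C * mom ω (2 * (2 ^ i * N))) := by gcongr
      _ = _ := by rw [← mul_assoc, ← pow_succ, ← mul_assoc, ← pow_succ']

/-- For an atomless measure, a set `S` bounded below has mass at most `s` as soon as the tails
`(r, ∞)` with `r ∈ S` do. -/
lemma measure_le_of_tails {ν : Measure ℝ} (hν : ∀ x, ν {x} = 0) {S : Set ℝ} {s : ENNReal}
    (hS : BddBelow S) (h : ∀ r ∈ S, ν (Set.Ioi r) ≤ s) : ν S ≤ s := by
  rcases S.eq_empty_or_nonempty with rfl | hne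
  · simp
  obtain ⟨u, hu, hlim, hmem⟩ := exists_seq_tendsto_sInf hne hS
  have hsub : S ⊆ {sInf S} ∪ ⋃ k, Set.Ioi (u k) := by
    intro x hx
    by_cases hxs : x = sInf S
    · left; exact hxs
    · right
      have hlt : sInf S < x := lt_of_le_of_ne (csInf_le hS hx) (Ne.symm hxs)
      obtain ⟨k, hk⟩ := (hlim.eventually_lt_const hlt).exists
      exact Set.mem_iUnion.2 ⟨k, hk⟩
  have hmono : Monotone fun k => Set.Ioi (u k) := fun i j hij => Set.Ioi_subset_Ioi (hu hij)
  calc ν S ≤ ν ({sInf S} ∪ ⋃ k, Set.Ioi (u k)) := measure_mono hsub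
    _ ≤ ν {sInf S} + ν (⋃ k, Set.Ioi (u k)) := measure_union_le _ _
    _ = ν (⋃ k, Set.Ioi (u k)) := by rw [hν, zero_add]
    _ = ⨆ k, ν (Set.Ioi (u k)) := hmono.measure_iUnion
    _ ≤ s := iSup_le fun k => h _ (hmem k)

/-- The layer-cake estimate `∫ r ^ N ω̂ ^ (-a) ω ≤ C (∫ r ^ N ω) ^ (1 - a)`. -/
lemma tail_power {ω : ℝ → ℝ} (hω : IsWeight ω) (hpos : ∀ r ∈ Set.Ico (0:ℝ) 1, 0 < wh ω r)
    {a : ℝ} (ha : 0 < a) (ha1 : a < 1) (N : ℕ) :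
    ∫⁻ r in Set.Ioo (0:ℝ) 1, ENNReal.ofReal (r ^ N * ω r) * ENNReal.ofReal (whi ω r ^ (-a))
      ≤ ENNReal.ofReal ((1 + (1 / a - 1)⁻¹) * mom ω N ^ (1 - a)) := by
  set V := mom ω N with hV
  have hV0 : 0 < V := mom_pos hω hpos N
  have hm : Measurable (whi ω) := (whi_anti hω).measurable
  have hexp : 0 < 1 / a - 1 := by
    rw [sub_pos, lt_div_iff₀ ha]; linarith
  have hwn : ∀ r, 0 ≤ whi ω r := fun r => integral_nonneg (wi_nonneg hω)
  rw [← mw_lintegral hω N (by fun_prop), lintegral_eq_lintegral_meas_le _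
    (Eventually.of_forall fun r => by show 0 ≤ _; exact Real.rpow_nonneg (hwn r) _)
    (hm.pow_const _).aemeasurable]
  have key : ∀ t : ℝ, 0 < t → mw ω N {r | t ≤ whi ω r ^ (-a)} ≤ ENNReal.ofReal (t ^ (-(1/a))) := by
    intro t ht
    have hae : mw ω N {r | t ≤ whi ω r ^ (-a)}
        = mw ω N ({r | t ≤ whi ω r ^ (-a)} ∩ Set.Ioo 0 1) := by
      refine measure_congr ?_
      filter_upwards [mw_ae_mem ω N] with r hr
      exact propext ⟨fun h => ⟨h, hr⟩, fun h => h.1⟩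
    rw [hae]
    refine measure_le_of_tails (mw_singleton ω N) ⟨0, fun r hr => hr.2.1.le⟩ ?_
    rintro r ⟨hr, hr01⟩
    have hr : t ≤ whi ω r ^ (-a) := hr
    refine (mw_le hω N _ measurableSet_Ioi).trans ?_
    rw [mw_Ioi hω r hr01.1.le]
    refine ENNReal.ofReal_le_ofReal ?_
    rw [whi_eq ω r hr01.1.le] at hr
    have hp := hpos r ⟨hr01.1.le, hr01.2⟩
    calc wh ω r = (wh ω r ^ (-a)) ^ (-(1/a)) := by
          rw [← Real.rpow_mul hp.le]
          rw [show (-a) * (-(1/a)) = 1 by field_simp, Real.rpow_one]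
      _ ≤ t ^ (-(1/a)) := Real.rpow_le_rpow_of_nonpos ht hr (by
          have : 0 < 1 / a := by positivity
          linarith)
  set T := V ^ (-a) with hT
  have hT0 : 0 < T := Real.rpow_pos_of_pos hV0 _
  rw [← Set.Ioc_union_Ioi_eq_Ioi hT0.le]
  refine (lintegral_union_le _ _ _).trans ?_
  have h1 : ∫⁻ t in Set.Ioc 0 T, mw ω N {r | t ≤ whi ω r ^ (-a)} ≤ ENNReal.ofReal (V ^ (1 - a)) := by
    calc _ ≤ ∫⁻ t in Set.Ioc 0 T, ENNReal.ofReal V := by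
          refine lintegral_mono fun t => ?_
          rw [hV, ← mw_univ hω N]
          exact measure_mono (Set.subset_univ _)
      _ = _ := by
          rw [setLIntegral_const, Real.volume_Ioc, sub_zero, ← ENNReal.ofReal_mul hV0.le, hT]
          congr 1
          rw [← Real.rpow_one_add' hV0.le (by linarith)]
          congr 1
  have h2 : ∫⁻ t in Set.Ioi T, mw ω N {r | t ≤ whi ω r ^ (-a)}
      ≤ ENNReal.ofReal ((1 / a - 1)⁻¹ * V ^ (1 - a)) := by
    calc _ ≤ ∫⁻ t in Set.Ioi T, ENNReal.ofReal (t ^ (-(1/a))) :=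
          setLIntegral_mono' measurableSet_Ioi fun t ht => key t (hT0.trans ht)
      _ = ENNReal.ofReal (∫ t in Set.Ioi T, t ^ (-(1/a))) := by
          rw [ofReal_integral_eq_lintegral_ofReal]
          · exact integrableOn_Ioi_rpow_of_lt (by linarith) hT0
          · refine (ae_restrict_mem measurableSet_Ioi).mono fun t ht => ?_
            exact Real.rpow_nonneg (hT0.trans ht).le _
      _ = _ := by
          rw [integral_Ioi_rpow_of_lt (by linarith) hT0, hT, ← Real.rpow_mul hV0.le]
          congr 1
          rw [show (-a) * (-(1/a) + 1) = 1 - a by field_simp; ring]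
          rw [show -(1/a) + 1 = -(1/a - 1) by ring, neg_div_neg_eq, div_eq_inv_mul]
  refine (add_le_add h1 h2).trans ?_
  rw [← ENNReal.ofReal_add (by positivity) (by positivity)]
  apply le_of_eq
  congr 1
  ring

/-! ### Dyadic blocks -/

lemma pow_mul_one_sub_le (l : ℕ) (s : ℝ) (h0 : 0 ≤ s) (h1 : s ≤ 1) :
    (l + 1) * (s ^ l * (1 - s)) ≤ 1 := by
  have hs : (l + 1) * s ^ l ≤ ∑ i ∈ Finset.range (l + 1), s ^ i := by
    have : ∑ i ∈ Finset.range (l + 1), s ^ l ≤ ∑ i ∈ Finset.range (l + 1), s ^ i :=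
      Finset.sum_le_sum fun i hi =>
        pow_le_pow_of_le_one h0 h1 (Nat.lt_succ_iff.1 (Finset.mem_range.1 hi))
    simpa using this
  have hg : (∑ i ∈ Finset.range (l + 1), s ^ i) * (1 - s) = 1 - s ^ (l + 1) := by
    have := geom_sum_mul_neg s (l + 1)
    linarith
  have := mul_le_mul_of_nonneg_right hs (sub_nonneg.2 h1)
  have h3 : 0 ≤ s ^ (l + 1) := by positivity
  linarith

lemma cf_pos {n : ℕ} {ω : ℝ → ℝ} (hω : IsWeight ω)
    (hpos : ∀ r ∈ Set.Ico (0:ℝ) 1, 0 < wh ω r) (k : ℕ) : 0 < cf n ω k := by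
  have := vb_pos n
  have := g0_pos n
  have := mom_pos hω hpos (2 * k + 2 * n - 1)
  unfold cf
  positivity

lemma cf_rec {n : ℕ} (hn : 1 ≤ n) {ω : ℝ → ℝ} (hω : IsWeight ω)
    (hpos : ∀ r ∈ Set.Ico (0:ℝ) 1, 0 < wh ω r) (k : ℕ) :
    cf n ω k * (mom ω (2 * k + 2 * n - 1) * (k + n))
      = cf n ω (k + 1) * (mom ω (2 * (k + 1) + 2 * n - 1) * (k + 1)) := by
  have h1 := (mom_pos hω hpos (2 * k + 2 * n - 1)).ne'
  have h2 := (mom_pos hω hpos (2 * (k + 1) + 2 * n - 1)).ne'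
  have h3 : ((k + 1 + n - 1).factorial : ℝ) = (k + n) * (k + n - 1).factorial := by
    rw [show k + 1 + n - 1 = (k + n - 1) + 1 by omega, Nat.factorial_succ,
      show k + n - 1 + 1 = k + n by omega]
    push_cast; ring
  have h4 : ((k + 1).factorial : ℝ) = (k + 1) * k.factorial := by
    rw [Nat.factorial_succ]; push_cast; ring
  have h5 : (k.factorial : ℝ) ≠ 0 := by positivity
  have h6 : (k:ℝ) + 1 ≠ 0 := by positivity
  have h7 := (g0_pos n).ne'
  unfold cf
  rw [h3, h4]
  field_simp

lemma cf_mono {n : ℕ} (hn : 1 ≤ n) {ω : ℝ → ℝ} (hω : IsWeight ω)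
    (hpos : ∀ r ∈ Set.Ico (0:ℝ) 1, 0 < wh ω r) : Monotone (cf n ω) := by
  refine monotone_nat_of_le_succ fun k => ?_
  have h := cf_rec hn hω hpos k
  have h1 := mom_pos hω hpos (2 * k + 2 * n - 1)
  have h3 := mom_anti hω (show 2 * k + 2 * n - 1 ≤ 2 * (k + 1) + 2 * n - 1 by omega)
  have h4 := cf_pos (n := n) hω hpos (k + 1)
  have hn' : (1:ℝ) ≤ n := by exact_mod_cast hn
  have hk : (0:ℝ) ≤ k := by positivity
  have h5 : mom ω (2 * (k + 1) + 2 * n - 1) * (k + 1) ≤ mom ω (2 * k + 2 * n - 1) * (k + n) := by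
    gcongr
  have h6 : cf n ω k * (mom ω (2 * k + 2 * n - 1) * (k + n))
      ≤ cf n ω (k + 1) * (mom ω (2 * k + 2 * n - 1) * (k + n)) := by
    rw [h]; gcongr
  exact le_of_mul_le_mul_right h6 (by positivity)

/-- Slow variation of the moments, from `k r ^ k (1 - r) ≤ 1` and doubling. -/
lemma mom_diff {n : ℕ} (hn : 1 ≤ n) {ω : ℝ → ℝ} (hω : IsWeight ω) {C : ℝ} (hC1 : 1 ≤ C)
    (hC : ∀ r ∈ Set.Ico (0:ℝ) 1, wh ω r ≤ C * wh ω ((1 + r) / 2)) (k : ℕ) :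
    (k + 1) * (mom ω (2 * k + 2 * n - 1) - mom ω (2 * (k + 1) + 2 * n - 1))
      ≤ 2 * C * mom ω (2 * k + 2 * n - 1) := by
  have h1 : (k + 1) * (mom ω (2 * k + 2 * n - 1) - mom ω (2 * (k + 1) + 2 * n - 1))
      ≤ 2 * mom ω (k + n) := by
    unfold mom
    rw [← integral_sub (pow_mul_int hω _) (pow_mul_int hω _), ← integral_const_mul,
      ← integral_const_mul]
    refine setIntegral_mono_on (((pow_mul_int hω _).sub (pow_mul_int hω _)).const_mul _)
      ((pow_mul_int hω _).const_mul _) measurableSet_Ioo fun r hr => ?_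
    have hw := hω.1 r ⟨hr.1.le, hr.2⟩
    have hr0 := hr.1.le
    have h2 := pow_mul_one_sub_le k r hr0 hr.2.le
    have e1 : r ^ (2 * k + 2 * n - 1) = r ^ k * (r ^ (k + n) * r ^ (n - 1)) := by
      rw [← pow_add, ← pow_add]; congr 1; omega
    have e2 : r ^ (2 * (k + 1) + 2 * n - 1) = r ^ (2 * k + 2 * n - 1) * r ^ 2 := by
      rw [← pow_add]; congr 1; omega
    have h3 : r ^ (n - 1) ≤ 1 := pow_le_one₀ hr0 hr.2.le
    rw [e2, e1]
    have h4 : 0 ≤ r ^ (k + n) := by positivity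
    have h5 : 0 ≤ r ^ (n - 1) := by positivity
    have h6 : 0 ≤ (k + 1) * (r ^ k * (1 - r)) := by
      have := hr.2.le
      have : 0 ≤ 1 - r := by linarith
      positivity
    calc _ = ((k + 1) * (r ^ k * (1 - r))) * (1 + r) * r ^ (n - 1) * (r ^ (k + n) * ω r) := by ring
      _ ≤ 1 * 2 * 1 * (r ^ (k + n) * ω r) := by
        have := hr.2
        gcongr
        linarith
      _ = _ := by ring
  have h2 := mom_double hω hC1 hC (k + n) (by omega)
  have h3 := mom_anti hω (show 2 * k + 2 * n - 1 ≤ 2 * (k + n) by omega)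
  nlinarith

/-- Slow variation of the kernel coefficients. -/
lemma cf_diff {n : ℕ} (hn : 1 ≤ n) {ω : ℝ → ℝ} (hω : IsWeight ω)
    (hpos : ∀ r ∈ Set.Ico (0:ℝ) 1, 0 < wh ω r) {C : ℝ} (hC1 : 1 ≤ C)
    (hC : ∀ r ∈ Set.Ico (0:ℝ) 1, wh ω r ≤ C * wh ω ((1 + r) / 2)) (k : ℕ) :
    (k + 1) * (cf n ω (k + 1) - cf n ω k) ≤ (n + 2 * C) * cf n ω (k + 1) := by
  have h := cf_rec hn hω hpos k
  have h1 := mom_pos hω hpos (2 * k + 2 * n - 1)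
  have h2 := mom_diff hn hω hC1 hC k
  have h4 := cf_pos (n := n) hω hpos (k + 1)
  have hn' : (1:ℝ) ≤ n := by exact_mod_cast hn
  have hk : (0:ℝ) ≤ k := by positivity
  set a := cf n ω k
  set b := cf n ω (k + 1)
  set X := mom ω (2 * k + 2 * n - 1)
  set Y := mom ω (2 * (k + 1) + 2 * n - 1)
  have hXk : 0 < X * (k + n) := by positivity
  refine le_of_mul_le_mul_right (a := X * (k + n)) ?_ hXk
  have e : (k + 1) * (b - a) * (X * (k + n))
      = (k + 1) * b * (X * (k + n)) - (k + 1) * (b * (Y * (k + 1))) := by rw [← h]; ring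
  rw [e]
  have h5 : (k + 1) * (X * (k + n) - Y * (k + 1)) ≤ (n + 2 * C) * (X * (k + n)) := by
    have : (k + 1) * (X * (k + n) - Y * (k + 1))
        = (k + 1) * (X - Y) * (k + 1) + (k + 1) * X * (n - 1) := by ring
    rw [this]
    have a1 : (k + 1) * (X - Y) * (k + 1) ≤ 2 * C * X * (k + n) := by
      calc _ ≤ 2 * C * X * (k + 1) := by gcongr
        _ ≤ _ := by gcongr
    have a2 : (k + 1) * X * (n - 1) ≤ (k + n) * X * n := by
      gcongr
      linarith
    nlinarith
  nlinarith

/-- The `L¹` norm over circles of a smoothly truncated dyadic block of a power series with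
slowly varying coefficients. -/
lemma block_bound (a : ℕ → ℝ) (ha0 : ∀ k, 0 ≤ a k) (ham : Monotone a) (D : ℝ) (hD : 0 ≤ D)
    (had : ∀ k : ℕ, (k + 1) * (a (k + 1) - a k) ≤ D * a (k + 1))
    (M : ℕ) (hM : 1 ≤ M) (χ : ℕ → ℝ) (hχ1 : ∀ k, |χ k| ≤ 1)
    (hχd : ∀ k, |χ (k + 1) - χ k| ≤ 1 / M)
    (hχs : ∀ k, χ k ≠ 0 → 3 * M ≤ k + 3 ∧ k < 16 * M) (w : ℂ) (hw : ‖w‖ ≤ 1) :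
    ∫ θ in (0:ℝ)..(2 * Real.pi), ‖∑ k ∈ Finset.range (16 * M), ((χ k * a k : ℝ) : ℂ) * (ee θ * w) ^ k‖
      ≤ 320 * (2 + D) * a (16 * M) * ‖w‖ ^ (2 * (M - 1)) := by
  set s := ‖w‖ with hs
  have hs0 : 0 ≤ s := norm_nonneg w
  set m2 := 2 * (M - 1) with hm2
  set A := (2 + D) * a (16 * M) * s ^ m2 with hA
  have hMp : (0:ℝ) < M := by exact_mod_cast hM
  have haM := ha0 (16 * M)
  have hsm : 0 ≤ s ^ m2 := by positivity
  have hA0 : 0 ≤ A := by positivity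
  set b : ℕ → ℝ := fun k => χ k * a k * s ^ k with hb
  have hle : ∀ k, |b k| ≤ a (16 * M) * s ^ m2 := by
    intro k
    by_cases h : χ k = 0
    · simp only [hb, h, zero_mul, abs_zero]; positivity
    · obtain ⟨h1, h2⟩ := hχs k h
      simp only [hb, abs_mul, abs_of_nonneg (ha0 k), abs_of_nonneg (pow_nonneg hs0 k)]
      calc |χ k| * a k * s ^ k ≤ 1 * a (16 * M) * s ^ m2 := by
            have := ha0 k
            gcongr ?_ * ?_ * ?_
            · exact hχ1 k
            · exact ham h2.le
            · exact pow_le_pow_of_le_one hs0 hw (by omega)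
        _ = _ := by ring
  have hbd : ∀ k, |b (k + 1) - b k| ≤ A / M := by
    intro k
    have e : b (k + 1) - b k = (χ (k + 1) - χ k) * a (k + 1) * s ^ (k + 1)
        + χ k * (a (k + 1) - a k) * s ^ (k + 1) - χ k * a k * (s ^ k * (1 - s)) := by
      simp only [hb]; ring
    have t1 : |(χ (k + 1) - χ k) * a (k + 1) * s ^ (k + 1)| ≤ 1 / M * a (16 * M) * s ^ m2 := by
      by_cases h : χ (k + 1) - χ k = 0
      · rw [h, zero_mul, zero_mul, abs_zero]; positivity
      · have hk : 3 * M ≤ k + 4 ∧ k < 16 * M := by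
          by_cases h1 : χ (k + 1) = 0
          · have h2 : χ k ≠ 0 := fun h2 => h (by rw [h1, h2, sub_zero])
            have := hχs k h2; omega
          · have := hχs (k + 1) h1; omega
        rw [abs_mul, abs_mul, abs_of_nonneg (ha0 (k + 1)), abs_of_nonneg (pow_nonneg hs0 (k + 1))]
        have := ha0 (k + 1)
        gcongr ?_ * ?_ * ?_
        · exact hχd k
        · exact ham (by omega)
        · exact pow_le_pow_of_le_one hs0 hw (by omega)
    have t2 : |χ k * (a (k + 1) - a k) * s ^ (k + 1)| ≤ D / M * a (16 * M) * s ^ m2 := by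
      by_cases h : χ k = 0
      · rw [h, zero_mul, zero_mul, abs_zero]; positivity
      · obtain ⟨h1, h2⟩ := hχs k h
        have hd0 : 0 ≤ a (k + 1) - a k := sub_nonneg.2 (ham (Nat.le_succ k))
        rw [abs_mul, abs_mul, abs_of_nonneg hd0, abs_of_nonneg (pow_nonneg hs0 (k + 1))]
        have hMk : (M:ℝ) ≤ k + 1 := by
          have : M ≤ k + 1 := by omega
          exact_mod_cast this
        have h3 : a (k + 1) - a k ≤ D / M * a (16 * M) := by
          rw [div_mul_eq_mul_div, le_div_iff₀ hMp]
          calc (a (k + 1) - a k) * M ≤ (a (k + 1) - a k) * (k + 1) := by gcongr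
            _ = (k + 1) * (a (k + 1) - a k) := by ring
            _ ≤ D * a (k + 1) := had k
            _ ≤ D * a (16 * M) := by
              have := ham (show k + 1 ≤ 16 * M by omega)
              gcongr
        calc _ ≤ 1 * (D / M * a (16 * M)) * s ^ m2 := by
              gcongr ?_ * ?_ * ?_
              · exact hχ1 k
              · exact pow_le_pow_of_le_one hs0 hw (by omega)
          _ = _ := by ring
    have t3 : |χ k * a k * (s ^ k * (1 - s))| ≤ 1 / M * a (16 * M) * s ^ m2 := by
      by_cases h : χ k = 0
      · rw [h, zero_mul, zero_mul, abs_zero]; positivity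
      · obtain ⟨h1, h2⟩ := hχs k h
        obtain ⟨l, rfl⟩ : ∃ l, k = m2 + l := ⟨k - m2, by omega⟩
        have hMl : (M:ℝ) ≤ l + 1 := by
          have : M ≤ l + 1 := by omega
          exact_mod_cast this
        have h1s : 0 ≤ 1 - s := sub_nonneg.2 hw
        have h3 : s ^ l * (1 - s) ≤ 1 / M := by
          rw [le_div_iff₀ hMp]
          have h4 := pow_mul_one_sub_le l s hs0 hw
          calc s ^ l * (1 - s) * M ≤ s ^ l * (1 - s) * (l + 1) := by gcongr
            _ ≤ 1 := by linarith
        rw [abs_mul, abs_mul, abs_of_nonneg (ha0 _),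
          abs_of_nonneg (mul_nonneg (pow_nonneg hs0 (m2 + l)) h1s)]
        calc _ = |χ (m2 + l)| * a (m2 + l) * (s ^ m2 * (s ^ l * (1 - s))) := by
              rw [pow_add]; ring
          _ ≤ 1 * a (16 * M) * (s ^ m2 * (1 / M)) := by
              have := ha0 (m2 + l)
              gcongr ?_ * ?_ * (_ * ?_)
              · exact hχ1 _
              · exact ham h2.le
          _ = _ := by ring
    rw [e]
    calc _ ≤ _ := abs_sub _ _
      _ ≤ 1 / M * a (16 * M) * s ^ m2 + D / M * a (16 * M) * s ^ m2
          + 1 / M * a (16 * M) * s ^ m2 := add_le_add ((abs_add_le _ _).trans (add_le_add t1 t2)) t3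
      _ = A / M := by rw [hA]; field_simp; ring
  have hD1 : a (16 * M) * s ^ m2 ≤ A := by
    rw [hA]; nlinarith [mul_nonneg haM hsm, mul_nonneg hD (mul_nonneg haM hsm)]
  have hmain := block_L1 16 M (by norm_num) hM A hA0 (fun k => ((b k : ℝ) : ℂ))
    (fun k hk => by
      have : χ k = 0 := by
        by_contra h
        have := hχs k h; omega
      simp [hb, this])
    (fun k => by rw [Complex.norm_real]; exact (hle k).trans hD1)
    (by
      rw [Complex.norm_real]
      by_cases h : χ 0 = 0
      · simp only [hb, h, zero_mul, norm_zero]; positivity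
      · have := hχs 0 h
        have hM1 : M = 1 := by omega
        have : (M:ℝ) = 1 := by rw [hM1]; norm_num
        rw [this, div_one]
        exact (hle 0).trans hD1)
    (fun k => by
      rw [← Complex.ofReal_sub, Complex.norm_real]; exact hbd k)
  -- remove the phase of `w` by translating the angle
  obtain ⟨α, hα⟩ : ∃ α : ℝ, w = s * ee α := by
    refine ⟨w.arg, ?_⟩
    rw [hs, ee]
    exact (Complex.norm_mul_exp_arg_mul_I w).symm
  set F : ℝ → ℝ := fun θ => ‖∑ k ∈ Finset.range (16 * M), ((b k : ℝ) : ℂ) * ee θ ^ k‖ with hF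
  have hper : Function.Periodic F (2 * Real.pi) := by
    intro θ; simp only [hF, ee_periodic θ]
  have hsh : ∀ θ, ‖∑ k ∈ Finset.range (16 * M), ((χ k * a k : ℝ) : ℂ) * (ee θ * w) ^ k‖
      = F (θ + α) := by
    intro θ
    simp only [hF, hb, ee_add]
    congr 1
    refine Finset.sum_congr rfl fun k _ => ?_
    rw [hα]
    push_cast
    ring
  simp_rw [hsh]
  rw [intervalIntegral.integral_comp_add_right,
    zero_add, add_comm (2 * Real.pi) α, hper.intervalIntegral_add_eq α 0, zero_add]
  refine hmain.trans (le_of_eq ?_)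
  rw [hA]
  push_cast
  ring

/-- Piecewise linear cutoff, equal to `1` up to `8 * 2 ^ j` and to `0` from `16 * 2 ^ j` on. -/
def cut (j k : ℕ) : ℝ := max 0 (min 1 (2 - k / (8 * 2 ^ j)))

/-- The dyadic partition of unity `cut j - cut (j - 1)`, with `cut (-1) = 0`. -/
def chi : ℕ → ℕ → ℝ
  | 0, k => cut 0 k
  | j + 1, k => cut (j + 1) k - cut j k

lemma cut_nonneg (j k : ℕ) : 0 ≤ cut j k := le_max_left _ _

lemma cut_le_one (j k : ℕ) : cut j k ≤ 1 := max_le zero_le_one (min_le_left _ _)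

lemma cut_one (j k : ℕ) (h : k ≤ 8 * 2 ^ j) : cut j k = 1 := by
  have h' : (k:ℝ) ≤ 8 * 2 ^ j := by exact_mod_cast h
  have : (k:ℝ) / (8 * 2 ^ j) ≤ 1 := (div_le_one (by positivity)).2 h'
  unfold cut
  rw [min_eq_left (by linarith), max_eq_right zero_le_one]

lemma cut_zero (j k : ℕ) (h : 16 * 2 ^ j ≤ k) : cut j k = 0 := by
  have h' : (16:ℝ) * 2 ^ j ≤ k := by exact_mod_cast h
  have : 2 ≤ (k:ℝ) / (8 * 2 ^ j) := by rw [le_div_iff₀ (by positivity)]; linarith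
  unfold cut
  exact max_eq_left ((min_le_right _ _).trans (by linarith))

lemma cut_diff (j k : ℕ) : |cut j (k + 1) - cut j k| ≤ 1 / (8 * 2 ^ j) := by
  unfold cut
  have h1 := abs_max_sub_max_le_max (0:ℝ) (min 1 (2 - ((k + 1 : ℕ) : ℝ) / (8 * 2 ^ j))) 0
    (min 1 (2 - k / (8 * 2 ^ j)))
  rw [sub_self, abs_zero, max_eq_right (a := (0:ℝ)) (b := |_|) (abs_nonneg _)] at h1
  refine h1.trans ?_
  have h2 := abs_min_sub_min_le_max (1:ℝ) (2 - ((k + 1 : ℕ) : ℝ) / (8 * 2 ^ j)) 1 (2 - k / (8 * 2 ^ j))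
  refine h2.trans (max_le ?_ ?_)
  · rw [sub_self, abs_zero]; positivity
  · apply le_of_eq
    push_cast
    rw [show (2 - ((k:ℝ) + 1) / (8 * 2 ^ j) - (2 - k / (8 * 2 ^ j))) = -(1 / (8 * 2 ^ j)) by ring,
      abs_neg, abs_of_pos (by positivity)]

lemma chi_abs (j k : ℕ) : |chi j k| ≤ 1 := by
  cases j with
  | zero => exact abs_le.2 ⟨by have := cut_nonneg 0 k; simp only [chi]; linarith, cut_le_one 0 k⟩
  | succ j =>
    have := cut_nonneg j k
    have := cut_le_one j k
    have := cut_nonneg (j + 1) k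
    have := cut_le_one (j + 1) k
    exact abs_le.2 ⟨by simp only [chi]; linarith, by simp only [chi]; linarith⟩

lemma chi_diff (j k : ℕ) : |chi j (k + 1) - chi j k| ≤ 1 / ((2 ^ j : ℕ) : ℝ) := by
  push_cast
  cases j with
  | zero => refine (cut_diff 0 k).trans ?_; norm_num
  | succ j =>
    have e : chi (j + 1) (k + 1) - chi (j + 1) k
      = (cut (j + 1) (k + 1) - cut (j + 1) k) - (cut j (k + 1) - cut j k) := by
      simp only [chi]; ring
    rw [e]
    refine (abs_sub _ _).trans ((add_le_add (cut_diff (j + 1) k) (cut_diff j k)).trans ?_)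
    rw [pow_succ]
    have : (0:ℝ) < 2 ^ j := by positivity
    rw [div_add_div _ _ (by positivity) (by positivity), div_le_div_iff₀ (by positivity)
      (by positivity)]
    nlinarith [mul_pos (mul_pos this this) this]

lemma chi_supp (j k : ℕ) (h : chi j k ≠ 0) : 3 * 2 ^ j ≤ k + 3 ∧ k < 16 * 2 ^ j := by
  cases j with
  | zero =>
    refine ⟨by simp, ?_⟩
    by_contra hk
    exact h (cut_zero 0 k (not_lt.1 hk))
  | succ j =>
    have h2 : 2 ^ (j + 1) = 2 * 2 ^ j := by rw [pow_succ]; ring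
    constructor
    · by_contra hk
      refine h ?_
      simp only [chi]
      rw [cut_one (j + 1) k (by omega), cut_one j k (by omega), sub_self]
    · by_contra hk
      refine h ?_
      simp only [chi]
      rw [cut_zero (j + 1) k (by omega), cut_zero j k (by omega), sub_self]

lemma chi_sum (J k : ℕ) : ∑ j ∈ Finset.range (J + 1), chi j k = cut J k := by
  induction J with
  | zero => simp [chi]
  | succ J ih => rw [Finset.sum_range_succ, ih]; simp only [chi]; ring

/-- The `j`-th dyadic block of the power series with coefficients `a`. -/
def blk (a : ℕ → ℝ) (j : ℕ) (w : ℂ) : ℂ :=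
  ∑ k ∈ Finset.range (16 * 2 ^ j), ((chi j k * a k : ℝ) : ℂ) * w ^ k

lemma blk_continuous (a : ℕ → ℝ) (j : ℕ) : Continuous (blk a j) := by unfold blk; fun_prop

/-- The blocks add up to the power series, because the cutoffs `cut J` tend to `1`. -/
lemma sum_le_blocks (a : ℕ → ℝ) (w b : ℂ) (h : HasSum (fun k => (a k : ℂ) * w ^ k) b) :
    ENNReal.ofReal ‖b‖ ≤ ∑' j, ENNReal.ofReal ‖blk a j w‖ := by
  have hpart : ∀ J, ∑' k, (cut J k : ℂ) * ((a k : ℂ) * w ^ k)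
      = ∑ j ∈ Finset.range (J + 1), blk a j w := by
    intro J
    have hb : ∀ j ∈ Finset.range (J + 1), blk a j w
        = ∑ k ∈ Finset.range (16 * 2 ^ J), ((chi j k * a k : ℝ) : ℂ) * w ^ k := by
      intro j hj
      have hjJ : 2 ^ j ≤ 2 ^ J :=
        Nat.pow_le_pow_right (by norm_num) (Nat.lt_succ_iff.1 (Finset.mem_range.1 hj))
      refine Finset.sum_subset (Finset.range_subset_range.2 (by omega)) fun k _ hk => ?_
      have : chi j k = 0 := by
        by_contra hne
        exact hk (Finset.mem_range.2 (chi_supp j k hne).2)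
      rw [this]; simp
    rw [Finset.sum_congr rfl hb, Finset.sum_comm, tsum_eq_sum (s := Finset.range (16 * 2 ^ J))]
    · refine Finset.sum_congr rfl fun k _ => ?_
      rw [← chi_sum J k, ← Finset.sum_mul]
      push_cast
      rw [← Finset.sum_mul, mul_assoc]
    · intro k hk
      rw [cut_zero J k (not_lt.1 fun h => hk (Finset.mem_range.2 h))]; simp
  have hlim : Tendsto (fun J => ∑' k, (cut J k : ℂ) * ((a k : ℂ) * w ^ k)) atTop
      (nhds (∑' k, (a k : ℂ) * w ^ k)) := by
    refine tendsto_tsum_of_dominated_convergence (bound := fun k => ‖(a k : ℂ) * w ^ k‖)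
      h.summable.norm (fun k => ?_) (Eventually.of_forall fun J k => ?_)
    · refine tendsto_const_nhds.congr' ?_
      filter_upwards [eventually_ge_atTop k] with J hJ
      have : k ≤ 8 * 2 ^ J := by
        have := (Nat.lt_two_pow_self (n := J))
        omega
      rw [cut_one J k this]; simp
    · rw [norm_mul, Complex.norm_real, Real.norm_of_nonneg (cut_nonneg J k)]
      exact mul_le_of_le_one_left (norm_nonneg _) (cut_le_one J k)
  rw [h.tsum_eq] at hlim
  have hlim2 : Tendsto (fun J => ENNReal.ofReal ‖∑ j ∈ Finset.range (J + 1), blk a j w‖) atTop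
      (nhds (ENNReal.ofReal ‖b‖)) := by
    simp_rw [hpart] at hlim
    exact (ENNReal.continuous_ofReal.tendsto _).comp hlim.norm
  refine le_of_tendsto hlim2 (Eventually.of_forall fun J => ?_)
  calc _ ≤ ENNReal.ofReal (∑ j ∈ Finset.range (J + 1), ‖blk a j w‖) :=
        ENNReal.ofReal_le_ofReal (norm_sum_le _ _)
    _ = ∑ j ∈ Finset.range (J + 1), ENNReal.ofReal ‖blk a j w‖ :=
        ENNReal.ofReal_sum_of_nonneg fun _ _ => norm_nonneg _
    _ ≤ _ := ENNReal.sum_le_tsum _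

/-! ### The weighted integral of a block -/

lemma factorial_ratio (m p : ℕ) :
    (16 * (m + 1) + p).factorial * m.factorial
      ≤ 17 ^ p * ((m + p).factorial * (16 * (m + 1)).factorial) := by
  induction p with
  | zero => simp [mul_comm]
  | succ p ih =>
    rw [← add_assoc, ← add_assoc, Nat.factorial_succ, Nat.factorial_succ, pow_succ]
    calc _ = (16 * (m + 1) + p + 1) * ((16 * (m + 1) + p).factorial * m.factorial) := by ring
      _ ≤ (17 * (m + p + 1)) * (17 ^ p * ((m + p).factorial * (16 * (m + 1)).factorial)) :=
        Nat.mul_le_mul (by omega) ih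
      _ = _ := by ring

/-- Comparison of the coefficient at the top of a dyadic block with the moments at its bottom. -/
lemma cf_block {n : ℕ} (hn : 1 ≤ n) {ω : ℝ → ℝ} (hω : IsWeight ω)
    (hpos : ∀ r ∈ Set.Ico (0:ℝ) 1, 0 < wh ω r) {C : ℝ} (hC1 : 1 ≤ C)
    (hC : ∀ r ∈ Set.Ico (0:ℝ) 1, wh ω r ≤ C * wh ω ((1 + r) / 2)) (m : ℕ) :
    cf n ω (16 * (m + 1)) * (2 * g0 n * (m.factorial / (m + n - 1).factorial))
      ≤ vb n * 17 ^ (n - 1) * C ^ 6 / mom ω (2 * m + 2 * n - 1) := by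
  have hX := mom_pos hω hpos (2 * m + 2 * n - 1)
  have hY := mom_pos hω hpos (2 * (16 * (m + 1)) + 2 * n - 1)
  have hXY : mom ω (2 * m + 2 * n - 1) ≤ C ^ 6 * mom ω (2 * (16 * (m + 1)) + 2 * n - 1) := by
    -- six doublings, as `32 (m + 1) + 2 n - 1 ≤ 64 (2 m + 2 n - 1)`
    refine (mom_double_iter hω hC1 hC (2 * m + 2 * n - 1) (by omega) 6).trans ?_
    have := mom_anti hω (show 2 * (16 * (m + 1)) + 2 * n - 1 ≤ 2 ^ 6 * (2 * m + 2 * n - 1) by omega)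
    gcongr
  have hf : ((16 * (m + 1) + n - 1).factorial : ℝ) * m.factorial
      ≤ 17 ^ (n - 1) * ((m + n - 1).factorial * (16 * (m + 1)).factorial) := by
    have := factorial_ratio m (n - 1)
    rw [← Nat.add_sub_assoc hn, ← Nat.add_sub_assoc hn] at this
    exact_mod_cast this
  have hg := g0_pos n
  have hv := vb_pos n
  unfold cf
  set X := mom ω (2 * m + 2 * n - 1)
  set Y := mom ω (2 * (16 * (m + 1)) + 2 * n - 1)
  have p1 : (0:ℝ) < ((m + n - 1).factorial : ℝ) := by positivity
  have p2 : (0:ℝ) < ((16 * (m + 1)).factorial : ℝ) := by positivity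
  set P := ((16 * (m + 1) + n - 1).factorial : ℝ)
  set Q := ((m + n - 1).factorial : ℝ)
  set R := ((16 * (m + 1)).factorial : ℝ)
  have e : vb n / (2 * g0 n) * (P / R) / Y * (2 * g0 n * (m.factorial / Q))
      = vb n * (P * m.factorial / (Q * R)) * (1 / Y) := by field_simp
  rw [e]
  have h1 : P * m.factorial / (Q * R) ≤ 17 ^ (n - 1) := by
    rw [div_le_iff₀ (by positivity)]; exact hf
  have h2 : 1 / Y ≤ C ^ 6 / X := by
    rw [div_le_div_iff₀ hY hX]; linarith
  calc _ ≤ vb n * 17 ^ (n - 1) * (C ^ 6 / X) := by gcongr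
    _ = _ := by ring

/-- The radial density `ω̂ ^ (-a) ω`, extended by zero. -/
def dens (ω : ℝ → ℝ) (a r : ℝ) : ENNReal :=
  ENNReal.ofReal (whi ω r ^ (-a)) * ENNReal.ofReal (wi ω r)

lemma dens_meas {ω : ℝ → ℝ} (hω : IsWeight ω) (a : ℝ) : Measurable (dens ω a) :=
  (((whi_anti hω).measurable.pow_const _).ennreal_ofReal).mul (wi_meas hω).ennreal_ofReal

lemma dens_eq_zero (ω : ℝ → ℝ) (a : ℝ) {r : ℝ} (hr : 1 ≤ r) : dens ω a r = 0 := by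
  have : wi ω r = 0 := Set.indicator_of_notMem (fun h => absurd h.2 (not_lt.2 hr)) _
  simp [dens, this]

lemma dens_moment {ω : ℝ → ℝ} (hω : IsWeight ω) (hpos : ∀ r ∈ Set.Ico (0:ℝ) 1, 0 < wh ω r)
    {a : ℝ} (ha : 0 < a) (ha1 : a < 1) (N : ℕ) :
    ∫⁻ r in Set.Ioi (0:ℝ), ENNReal.ofReal (r ^ N) * dens ω a r
      ≤ ENNReal.ofReal ((1 + (1 / a - 1)⁻¹) * mom ω N ^ (1 - a)) := by
  refine le_trans (le_of_eq ?_) (tail_power hω hpos ha ha1 N)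
  rw [← lintegral_indicator measurableSet_Ioi, ← lintegral_indicator measurableSet_Ioo]
  congr 1
  ext r
  by_cases h0 : 0 < r
  · rw [Set.indicator_of_mem (Set.mem_Ioi.2 h0)]
    by_cases h1 : r < 1
    · rw [Set.indicator_of_mem (Set.mem_Ioo.2 ⟨h0, h1⟩), dens, wi,
        Set.indicator_of_mem (Set.mem_Ico.2 ⟨h0.le, h1⟩), ENNReal.ofReal_mul (by positivity)]
      ring
    · rw [Set.indicator_of_notMem (fun h => h1 h.2), dens_eq_zero ω a (not_lt.1 h1), mul_zero]
  · rw [Set.indicator_of_notMem (fun h => h0 (Set.mem_Ioi.1 h)), Set.indicator_of_notMem (fun h => h0 h.1)]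

/-- The weighted integral of one dyadic block of the kernel. -/
lemma block_int {n : ℕ} (hn : 1 ≤ n) {ω : ℝ → ℝ} (hω : IsWeight ω)
    (hpos : ∀ r ∈ Set.Ico (0:ℝ) 1, 0 < wh ω r) {C : ℝ} (hC1 : 1 ≤ C)
    (hC : ∀ r ∈ Set.Ico (0:ℝ) 1, wh ω r ≤ C * wh ω ((1 + r) / 2))
    {a : ℝ} (ha : 0 < a) (ha1 : a < 1) {z : En n} (hz : z ∈ Bl n) (j : ℕ) :
    ∫⁻ ξ : En n, ENNReal.ofReal ‖blk (cf n ω) j (inner ℂ z ξ)‖ * dens ω a ‖ξ‖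
      ≤ ENNReal.ofReal (320 * (2 + (n + 2 * C)) * (vb n * 17 ^ (n - 1) * C ^ 6)
        * (1 + (1 / a - 1)⁻¹) * (‖z‖ ^ (2 * (2 ^ j - 1))
        * mom ω (2 * (2 ^ j - 1) + 2 * n - 1) ^ (-a))) := by
  have hz1 : ‖z‖ < 1 := by simpa [Bl] using hz
  have hcont : Continuous fun ξ : En n => inner ℂ z ξ := by fun_prop
  set F : En n → ENNReal := fun ξ => ENNReal.ofReal ‖blk (cf n ω) j (inner ℂ z ξ)‖ * dens ω a ‖ξ‖
    with hF
  have hFm : Measurable F :=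
    (ENNReal.continuous_ofReal.comp
      ((blk_continuous _ j).comp hcont).norm).measurable.mul ((dens_meas hω a).comp measurable_norm)
  have hM : 1 ≤ 2 ^ j := Nat.one_le_two_pow
  obtain ⟨m, hm⟩ : ∃ m, 2 ^ j = m + 1 := ⟨2 ^ j - 1, by omega⟩
  have hm' : 2 ^ j - 1 = m := by omega
  rw [hm']
  set D : ℝ := n + 2 * C with hDdef
  have hD : 0 ≤ D := by positivity
  set S := cf n ω (16 * (m + 1)) with hS
  have hS0 : 0 < S := cf_pos hω hpos _
  have hinner : ∀ ξ : En n, ∫⁻ θ in Set.Ioc 0 (2 * Real.pi), F (ee θ • ξ)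
      ≤ ENNReal.ofReal (320 * (2 + D) * S) *
        (ENNReal.ofReal (‖inner ℂ z ξ‖ ^ (2 * m)) * dens ω a ‖ξ‖) := by
    intro ξ
    have hFe : ∀ θ, F (ee θ • ξ)
        = ENNReal.ofReal ‖blk (cf n ω) j (ee θ * inner ℂ z ξ)‖ * dens ω a ‖ξ‖ := by
      intro θ
      simp only [hF, inner_smul_right, norm_smul, norm_ee, one_mul]
    simp_rw [hFe]
    by_cases h1 : ‖ξ‖ < 1
    · have hcθ : Continuous fun θ : ℝ => ‖blk (cf n ω) j (ee θ * inner ℂ z ξ)‖ :=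
        ((blk_continuous _ j).comp (ee_continuous.mul continuous_const)).norm
      have hw : ‖(inner ℂ z ξ : ℂ)‖ ≤ 1 :=
        (norm_inner_le_norm z ξ).trans (mul_le_one₀ hz1.le (norm_nonneg _) h1.le)
      rw [lintegral_mul_const _ hcθ.measurable.ennreal_ofReal, ← mul_assoc]
      gcongr
      rw [← ofReal_integral_eq_lintegral_ofReal
        ((hcθ.integrableOn_Icc).mono_set Set.Ioc_subset_Icc_self)
        (Eventually.of_forall fun θ => norm_nonneg _),
        ← intervalIntegral.integral_of_le (by positivity), ← ENNReal.ofReal_mul (by positivity)]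
      refine ENNReal.ofReal_le_ofReal ?_
      have := block_bound (cf n ω) (fun k => (cf_pos hω hpos k).le) (cf_mono hn hω hpos) D hD
        (cf_diff hn hω hpos hC1 hC) (2 ^ j) hM (chi j) (chi_abs j) (chi_diff j) (chi_supp j) _ hw
      rw [hm'] at this
      rw [hS, ← hm]
      exact this
    · simp [dens_eq_zero ω a (not_lt.1 h1)]
  have hmeas : Measurable fun ξ : En n =>
      ENNReal.ofReal (‖inner ℂ z ξ‖ ^ (2 * m)) * dens ω a ‖ξ‖ :=
    (ENNReal.continuous_ofReal.comp (hcont.norm.pow _)).measurable.mul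
      ((dens_meas hω a).comp measurable_norm)
  have hX := mom_pos hω hpos (2 * m + 2 * n - 1)
  have hexp : 0 < 1 / a - 1 := by
    rw [sub_pos, lt_div_iff₀ ha]; linarith
  have hg := g0_pos n
  have hv := vb_pos n
  calc ∫⁻ ξ, F ξ ≤ ENNReal.ofReal (2 * Real.pi) * ∫⁻ ξ, F ξ := by
        refine le_mul_of_one_le_left zero_le ?_
        rw [← ENNReal.ofReal_one]
        exact ENNReal.ofReal_le_ofReal (by linarith [Real.pi_gt_three])
    _ = ∫⁻ ξ, ∫⁻ θ in Set.Ioc 0 (2 * Real.pi), F (ee θ • ξ) := rot_average_lintegral n F hFm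
    _ ≤ ∫⁻ ξ : En n, ENNReal.ofReal (320 * (2 + D) * S) *
        (ENNReal.ofReal (‖inner ℂ z ξ‖ ^ (2 * m)) * dens ω a ‖ξ‖) := lintegral_mono hinner
    _ = ENNReal.ofReal (320 * (2 + D) * S) *
        (ENNReal.ofReal (2 * g0 n * (m.factorial / (m + n - 1).factorial) * ‖z‖ ^ (2 * m))
        * ∫⁻ r in Set.Ioi (0:ℝ), ENNReal.ofReal (r ^ (2 * m + 2 * n - 1)) * dens ω a r) := by
        rw [lintegral_const_mul _ hmeas, inner_moment hn z m _ (dens_meas hω a)]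
    _ ≤ ENNReal.ofReal (320 * (2 + D) * S) *
        (ENNReal.ofReal (2 * g0 n * (m.factorial / (m + n - 1).factorial) * ‖z‖ ^ (2 * m))
        * ENNReal.ofReal ((1 + (1 / a - 1)⁻¹) * mom ω (2 * m + 2 * n - 1) ^ (1 - a))) := by
        gcongr
        exact dens_moment hω hpos ha ha1 _
    _ = ENNReal.ofReal (320 * (2 + D) * (S * (2 * g0 n * (m.factorial / (m + n - 1).factorial)))
        * (1 + (1 / a - 1)⁻¹) * (‖z‖ ^ (2 * m) * mom ω (2 * m + 2 * n - 1) ^ (1 - a))) := by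
        rw [← ENNReal.ofReal_mul (by positivity), ← ENNReal.ofReal_mul (by positivity)]
        congr 1
        ring
    _ ≤ ENNReal.ofReal (320 * (2 + D) * (vb n * 17 ^ (n - 1) * C ^ 6 / mom ω (2 * m + 2 * n - 1))
        * (1 + (1 / a - 1)⁻¹) * (‖z‖ ^ (2 * m) * mom ω (2 * m + 2 * n - 1) ^ (1 - a))) := by
        refine ENNReal.ofReal_le_ofReal ?_
        have := cf_block hn hω hpos hC1 hC m
        gcongr
    _ = _ := by
        congr 1
        have : mom ω (2 * m + 2 * n - 1) ^ (1 - a)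
            = mom ω (2 * m + 2 * n - 1) * mom ω (2 * m + 2 * n - 1) ^ (-a) := by
          rw [sub_eq_add_neg, Real.rpow_add hX, Real.rpow_one]
        rw [this]
        field_simp

/-- The weighted integral of the kernel is dominated by a dyadic sum. -/
lemma kernel_int {n : ℕ} (hn : 1 ≤ n) {ω : ℝ → ℝ} (hω : IsWeight ω)
    (hpos : ∀ r ∈ Set.Ico (0:ℝ) 1, 0 < wh ω r) {C : ℝ} (hC1 : 1 ≤ C)
    (hC : ∀ r ∈ Set.Ico (0:ℝ) 1, wh ω r ≤ C * wh ω ((1 + r) / 2))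
    {a : ℝ} (ha : 0 < a) (ha1 : a < 1) {B : En n → En n → ℂ} (hB : IsRepKernel n ω B)
    {z : En n} (hz : z ∈ Bl n) :
    ∫⁻ ξ in Bl n, ENNReal.ofReal (‖B z ξ‖ * wh ω ‖ξ‖ ^ (-a) * ω ‖ξ‖) ∂(nV n)
      ≤ (volume (ball (0 : En n) 1))⁻¹ *
        ∑' j : ℕ, ENNReal.ofReal (320 * (2 + (n + 2 * C)) * (vb n * 17 ^ (n - 1) * C ^ 6)
        * (1 + (1 / a - 1)⁻¹) * (‖z‖ ^ (2 * (2 ^ j - 1))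
        * mom ω (2 * (2 ^ j - 1) + 2 * n - 1) ^ (-a))) := by
  have hcont : Continuous fun ξ : En n => inner ℂ z ξ := by fun_prop
  rw [nV, Measure.restrict_smul, lintegral_smul_measure, smul_eq_mul]
  gcongr
  calc _ ≤ ∫⁻ ξ in Bl n, ∑' j, ENNReal.ofReal ‖blk (cf n ω) j (inner ℂ z ξ)‖ * dens ω a ‖ξ‖ := by
        refine setLIntegral_mono' (Bl_meas n) fun ξ hξ => ?_
        have h1 : ‖ξ‖ < 1 := by simpa [Bl] using hξ
        have hw := hpos ‖ξ‖ ⟨norm_nonneg _, h1⟩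
        rw [ENNReal.tsum_mul_right, mul_assoc, ENNReal.ofReal_mul (norm_nonneg _),
          ENNReal.ofReal_mul (by positivity)]
        refine mul_le_mul' (sum_le_blocks _ _ _ (kernel_hasSum hn hω hpos hB hz hξ)) (le_of_eq ?_)
        rw [dens, whi_eq ω _ (norm_nonneg _), wi,
          Set.indicator_of_mem (Set.mem_Ico.2 ⟨norm_nonneg _, h1⟩)]
    _ ≤ ∫⁻ ξ, ∑' j, ENNReal.ofReal ‖blk (cf n ω) j (inner ℂ z ξ)‖ * dens ω a ‖ξ‖ :=
        setLIntegral_le_lintegral _ _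
    _ = ∑' j, ∫⁻ ξ, ENNReal.ofReal ‖blk (cf n ω) j (inner ℂ z ξ)‖ * dens ω a ‖ξ‖ :=
        lintegral_tsum fun j => ((ENNReal.continuous_ofReal.comp
          ((blk_continuous _ j).comp hcont).norm).measurable.mul
          ((dens_meas hω a).comp measurable_norm)).aemeasurable
    _ ≤ _ := ENNReal.tsum_le_tsum fun j => block_int hn hω hpos hC1 hC ha ha1 hz j

/-! ### Summation over the blocks -/

/-- Partial sums of a positive sequence that grows geometrically along steps of length `p` are
comparable to their last term. -/
lemma head_sum (V : ℕ → ℝ) (hV : ∀ j, 0 < V j) (hmono : Monotone V) (p : ℕ) (hp : 1 ≤ p) (c : ℝ)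
    (hc : 1 < c) (hgrow : ∀ j, c * V j ≤ V (j + p)) (J : ℕ) :
    ∑ j ∈ Finset.range (J + 1), V j ≤ p * c / (c - 1) * V J := by
  have hc1 : 0 < c - 1 := by linarith
  have hc0 : 0 < c := by linarith
  have hle : (p:ℝ) ≤ p * c / (c - 1) := by
    rw [le_div_iff₀ hc1]
    have : (0:ℝ) ≤ p := by positivity
    nlinarith
  induction J using Nat.strong_induction_on with
  | _ J ih =>
    by_cases hJ : J < p
    · calc _ ≤ ∑ j ∈ Finset.range (J + 1), V J :=
            Finset.sum_le_sum fun j hj => hmono (Nat.lt_succ_iff.1 (Finset.mem_range.1 hj))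
        _ = (J + 1 : ℕ) * V J := by simp
        _ ≤ p * V J := by
          have := (hV J).le
          gcongr
          omega
        _ ≤ _ := by have := (hV J).le; gcongr
    · obtain ⟨i, rfl⟩ : ∃ i, J = i + p := ⟨J - p, by omega⟩
      rw [show i + p + 1 = (i + 1) + p by ring, Finset.sum_range_add]
      have h1 := ih i (by omega)
      have h2 : ∑ x ∈ Finset.range p, V (i + 1 + x) ≤ p * V (i + p) := by
        calc _ ≤ ∑ x ∈ Finset.range p, V (i + p) :=
              Finset.sum_le_sum fun x hx => hmono (by have := Finset.mem_range.1 hx; omega)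
          _ = _ := by simp
      have h3 : V i ≤ V (i + p) / c := by
        rw [le_div_iff₀ hc0]; linarith [hgrow i]
      calc _ ≤ p * c / (c - 1) * (V (i + p) / c) + p * V (i + p) := by
            refine add_le_add (h1.trans ?_) h2
            gcongr
        _ = _ := by field_simp; ring

lemma exp_summable (A : ℝ) (hA : 0 < A) : Summable fun i : ℕ => Real.exp (-2 ^ i) * A ^ (i + 2) := by
  refine summable_of_ratio_test_tendsto_lt_one (l := 0) one_pos
    (Eventually.of_forall fun i => by positivity) ?_
  have h : ∀ i : ℕ, ‖Real.exp (-2 ^ (i + 1)) * A ^ (i + 1 + 2)‖ / ‖Real.exp (-2 ^ i) * A ^ (i + 2)‖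
      = Real.exp (-2 ^ i) * A := by
    intro i
    rw [Real.norm_of_nonneg (by positivity), Real.norm_of_nonneg (by positivity),
      div_eq_iff (by positivity)]
    have : Real.exp (-2 ^ (i + 1)) = Real.exp (-2 ^ i) * Real.exp (-2 ^ i) := by
      rw [← Real.exp_add]; congr 1; ring
    rw [this]; ring
  simp_rw [h]
  have : Tendsto (fun i : ℕ => (2:ℝ) ^ i) atTop atTop := tendsto_pow_atTop_atTop_of_one_lt (by norm_num)
  simpa using ((Real.tendsto_exp_neg_atTop_nhds_zero).comp this).mul_const A

/-- Summation of the dyadic blocks: the terms before the critical index `J` are dominated by the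
geometric growth of `V`, those after it by the decay of `ρ ^ (2 ^ j)`. -/
lemma dyadic_sum (V : ℕ → ℝ) (hV : ∀ j, 0 < V j) (hmono : Monotone V) (p : ℕ) (hp : 1 ≤ p) (c : ℝ)
    (hc : 1 < c) (hgrow : ∀ j, c * V j ≤ V (j + p)) (A : ℝ) (hA : 1 ≤ A)
    (hdouble : ∀ j, V (j + 1) ≤ A * V j) :
    ∃ K : ℝ, 0 < K ∧ ∀ (J : ℕ) (ρ : ℝ), 0 ≤ ρ → ρ < 1 - (1 / 2) ^ (J + 1) →
      ∑' j : ℕ, ENNReal.ofReal (ρ ^ (2 * (2 ^ j - 1)) * V (j + 1)) ≤ ENNReal.ofReal (K * V J) := by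
  have hA0 : 0 < A := by linarith
  have hsum := exp_summable A hA0
  set S := ∑' i : ℕ, Real.exp (-2 ^ i) * A ^ (i + 2) with hS
  have hS0 : 0 ≤ S := tsum_nonneg fun i => by positivity
  have hc1 : 0 < c - 1 := by linarith
  have hp0 : (0:ℝ) < p := by exact_mod_cast hp
  refine ⟨A * (p * c / (c - 1)) + S, by positivity, fun J ρ hρ0 hρ => ?_⟩
  have hVJ := hV J
  have hρ1 : ρ ≤ 1 := by
    have : (0:ℝ) < (1 / 2) ^ (J + 1) := by positivity
    linarith
  have hiter : ∀ i, V (J + i) ≤ A ^ i * V J := by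
    intro i
    induction i with
    | zero => simp
    | succ i ih =>
      calc V (J + i + 1) ≤ A * V (J + i) := hdouble _
        _ ≤ A * (A ^ i * V J) := by gcongr
        _ = _ := by ring
  rw [← Summable.sum_add_tsum_nat_add' (k := J + 1) ENNReal.summable, add_mul,
    ENNReal.ofReal_add (by positivity) (by positivity)]
  refine add_le_add ?_ ?_
  · rw [← ENNReal.ofReal_sum_of_nonneg fun j _ => by have := hV (j + 1); positivity]
    refine ENNReal.ofReal_le_ofReal ?_
    calc _ ≤ ∑ j ∈ Finset.range (J + 1), A * V j := by
          refine Finset.sum_le_sum fun j _ => ?_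
          have := (hV (j + 1)).le
          calc _ ≤ 1 * V (j + 1) := by
                gcongr
                exact pow_le_one₀ hρ0 hρ1
            _ ≤ _ := by rw [one_mul]; exact hdouble j
      _ = A * ∑ j ∈ Finset.range (J + 1), V j := by rw [Finset.mul_sum]
      _ ≤ A * (p * c / (c - 1) * V J) := by
          gcongr
          exact head_sum V hV hmono p hp c hc hgrow J
      _ = _ := by ring
  · have hterm : ∀ i : ℕ, ρ ^ (2 * (2 ^ (i + (J + 1)) - 1)) * V (i + (J + 1) + 1)
        ≤ Real.exp (-2 ^ i) * A ^ (i + 2) * V J := by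
      intro i
      have h1 : ρ ≤ Real.exp (-(1 / 2) ^ (J + 1)) := by
        have := Real.add_one_le_exp (-(1 / 2 : ℝ) ^ (J + 1))
        linarith
      have h2 : 2 ^ (i + (J + 1)) ≤ 2 * (2 ^ (i + (J + 1)) - 1) := by
        have : 2 ^ (i + (J + 1)) = 2 * 2 ^ (i + J) := by rw [← add_assoc, pow_succ]; ring
        have h3 : 1 ≤ 2 ^ (i + J) := Nat.one_le_two_pow
        omega
      have h3 : ρ ^ (2 * (2 ^ (i + (J + 1)) - 1)) ≤ Real.exp (-2 ^ i) := by
        calc _ ≤ ρ ^ (2 ^ (i + (J + 1))) := pow_le_pow_of_le_one hρ0 hρ1 h2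
          _ ≤ Real.exp (-(1 / 2) ^ (J + 1)) ^ (2 ^ (i + (J + 1))) := by gcongr
          _ = _ := by
            rw [← Real.exp_nat_mul]
            congr 1
            push_cast
            rw [pow_add, one_div, inv_pow]
            field_simp
      have h4 := hiter (i + 2)
      rw [show i + (J + 1) + 1 = J + (i + 2) by ring, mul_assoc]
      have := (hV (J + (i + 2))).le
      gcongr
    calc _ ≤ ∑' i : ℕ, ENNReal.ofReal (Real.exp (-2 ^ i) * A ^ (i + 2) * V J) :=
          ENNReal.tsum_le_tsum fun i => ENNReal.ofReal_le_ofReal (hterm i)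
      _ = ENNReal.ofReal (∑' i : ℕ, Real.exp (-2 ^ i) * A ^ (i + 2) * V J) :=
          (ENNReal.ofReal_tsum_of_nonneg (fun i => by positivity) (hsum.mul_right _)).symm
      _ = _ := by rw [tsum_mul_right]

/-- The moment attached to the `j`-th block dominates the mass of the weight at distance
`2 ^ (-(j + 1))` from the boundary. -/
lemma mom_lower {n : ℕ} {ω : ℝ → ℝ} (hω : IsWeight ω)
    (hpos : ∀ r ∈ Set.Ico (0:ℝ) 1, 0 < wh ω r) (j : ℕ) :
    (1 / 4) ^ (n + 1) * wh ω (1 - (1 / 2) ^ (j + 1)) ≤ mom ω (2 * (2 ^ j - 1) + 2 * n - 1) := by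
  set r : ℝ := 1 - (1 / 2) ^ (j + 1) with hr
  have hhalf : ((1:ℝ) / 2) ^ (j + 1) ≤ 1 / 2 := by
    rw [pow_succ]
    have : ((1:ℝ) / 2) ^ j ≤ 1 := pow_le_one₀ (by norm_num) (by norm_num)
    linarith
  have hpow : (0:ℝ) < (1 / 2) ^ (j + 1) := by positivity
  have hr0 : 1 / 2 ≤ r := by rw [hr]; linarith
  have hr1 : r < 1 := by rw [hr]; linarith
  have hw := hpos r ⟨by linarith, hr1⟩
  have hM : 1 / 2 ≤ r ^ (2 ^ j) := by
    have := one_add_mul_le_pow (a := -((1:ℝ) / 2) ^ (j + 1)) (by linarith) (2 ^ j)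
    have e : (((2 ^ j : ℕ) : ℝ)) * -((1:ℝ) / 2) ^ (j + 1) = -(1 / 2) := by
      push_cast
      rw [pow_succ, one_div, inv_pow]
      field_simp
    rw [e] at this
    rw [hr, sub_eq_add_neg]
    linarith
  refine le_trans ?_ (mom_ge hω _ r (by linarith))
  gcongr
  calc ((1:ℝ) / 4) ^ (n + 1) = (1 / 2) ^ 2 * (1 / 2) ^ (2 * n) := by
        rw [pow_succ, pow_mul]; norm_num; ring
    _ ≤ (r ^ (2 ^ j)) ^ 2 * r ^ (2 * n) := by gcongr
    _ = r ^ (2 ^ j * 2 + 2 * n) := by rw [pow_add, pow_mul r (2 ^ j) 2]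
    _ ≤ _ := pow_le_pow_of_le_one (by linarith) hr1.le (by omega)

/-- The dyadic sum is controlled by `ω̂ ^ (-a)`. -/
lemma weight_sum (n : ℕ) {ω : ℝ → ℝ} (hω : IsWeight ω) (hD : DD ω)
    (hpos : ∀ r ∈ Set.Ico (0:ℝ) 1, 0 < wh ω r) {a : ℝ} (ha : 0 < a) :
    ∃ K : ℝ, 0 < K ∧ ∀ ρ : ℝ, 0 ≤ ρ → ρ < 1 →
      ∑' j : ℕ, ENNReal.ofReal (ρ ^ (2 * (2 ^ j - 1))
        * mom ω (2 * (2 ^ j - 1) + 2 * n - 1) ^ (-a)) ≤ ENNReal.ofReal (K * wh ω ρ ^ (-a)) := by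
  obtain ⟨⟨C, hC1, hC⟩, C', L, hC', hL, hCL⟩ := hD
  have hC0 : 0 < C := by linarith
  have hC'0 : 0 < C' := by linarith
  have hmem : ∀ j : ℕ, (1 - (1 / 2) ^ j : ℝ) ∈ Set.Ico (0:ℝ) 1 := by
    intro j
    have : ((1:ℝ) / 2) ^ j ≤ 1 := pow_le_one₀ (by norm_num) (by norm_num)
    have : (0:ℝ) < (1 / 2) ^ j := by positivity
    constructor <;> linarith
  set v : ℕ → ℝ := fun j => wh ω (1 - (1 / 2) ^ j) with hv
  have hvpos : ∀ j, 0 < v j := fun j => hpos _ (hmem j)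
  have hvanti : Antitone v := by
    intro i j hij
    have : ((1:ℝ) / 2) ^ j ≤ (1 / 2) ^ i := pow_le_pow_of_le_one (by norm_num) (by norm_num) hij
    exact wh_anti hω (hmem i).1 (by linarith)
  obtain ⟨p, hp⟩ := pow_unbounded_of_one_lt L (one_lt_two)
  have hp1 : 1 ≤ p := by
    by_contra h
    have : p = 0 := by omega
    rw [this] at hp
    linarith [pow_zero (2:ℝ)]
  have hgrow : ∀ j, C' * v (j + p) ≤ v j := by
    intro j
    refine le_trans ?_ (hCL _ (hmem j))
    have : wh ω (1 - (1 / 2) ^ (j + p)) ≤ wh ω (1 - (1 - (1 - (1 / 2) ^ j)) / L) := by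
      have h2 : ((1:ℝ) / 2) ^ (j + p) ≤ (1 / 2) ^ j / L := by
        rw [pow_add, div_eq_mul_inv ((1 / 2 : ℝ) ^ j) L, one_div, inv_pow, inv_pow]
        gcongr
      have h3 : ((1:ℝ) / 2) ^ j / L ≤ 1 := by
        rw [div_le_one (by linarith)]
        have := (hmem j).1
        linarith
      refine wh_anti hω ?_ ?_
      · rw [sub_sub_cancel]; linarith
      · rw [sub_sub_cancel]; linarith
    simp only [hv]
    gcongr
  have hdbl : ∀ j, v j ≤ C * v (j + 1) := by
    intro j
    have := hC _ (hmem j)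
    simp only [hv]
    convert this using 3
    rw [pow_succ]; ring
  obtain ⟨K, hK, hsum⟩ := dyadic_sum (fun j => v j ^ (-a))
    (fun j => Real.rpow_pos_of_pos (hvpos j) _)
    (fun i j hij => Real.rpow_le_rpow_of_nonpos (hvpos j) (hvanti hij) (by linarith))
    p hp1 (C' ^ a) (Real.one_lt_rpow hC' ha)
    (fun j => by
      have h1 : v (j + p) ≤ C'⁻¹ * v j := by
        rw [inv_mul_eq_div, le_div_iff₀ hC'0]; linarith [hgrow j]
      have := Real.rpow_le_rpow_of_nonpos (hvpos _) h1 (show -a ≤ 0 by linarith)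
      rwa [Real.mul_rpow (by positivity) (hvpos j).le, Real.inv_rpow hC'0.le,
        Real.rpow_neg hC'0.le, inv_inv] at this)
    (C ^ a) (Real.one_le_rpow hC1 ha.le)
    (fun j => by
      have h1 : C⁻¹ * v j ≤ v (j + 1) := by
        rw [inv_mul_eq_div, div_le_iff₀ hC0]; linarith [hdbl j]
      have h0 : 0 < C⁻¹ * v j := by have := hvpos j; positivity
      have := Real.rpow_le_rpow_of_nonpos h0 h1 (show -a ≤ 0 by linarith)
      rwa [Real.mul_rpow (by positivity) (hvpos j).le, Real.inv_rpow hC0.le,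
        Real.rpow_neg hC0.le, inv_inv] at this)
  set c0 : ℝ := ((1 / 4) ^ (n + 1)) ^ (-a) with hc0
  have hc0p : 0 < c0 := Real.rpow_pos_of_pos (by positivity) _
  refine ⟨c0 * K, by positivity, fun ρ hρ0 hρ1 => ?_⟩
  obtain ⟨J, hJ1, hJ2⟩ := exists_nat_pow_near_of_lt_one (x := 1 - ρ) (y := 1 / 2) (by linarith)
    (by linarith) (by norm_num) (by norm_num)
  calc _ ≤ ∑' j : ℕ, ENNReal.ofReal c0 *
        ENNReal.ofReal (ρ ^ (2 * (2 ^ j - 1)) * v (j + 1) ^ (-a)) := by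
        refine ENNReal.tsum_le_tsum fun j => ?_
        rw [← ENNReal.ofReal_mul hc0p.le]
        refine ENNReal.ofReal_le_ofReal ?_
        have hvj := hvpos (j + 1)
        have h1 := Real.rpow_le_rpow_of_nonpos (by positivity) (mom_lower (n := n) hω hpos j)
          (show -a ≤ 0 by linarith)
        rw [Real.mul_rpow (by positivity) hvj.le] at h1
        calc _ ≤ ρ ^ (2 * (2 ^ j - 1)) * (c0 * v (j + 1) ^ (-a)) := by gcongr
          _ = _ := by ring
    _ = ENNReal.ofReal c0 * ∑' j : ℕ,
        ENNReal.ofReal (ρ ^ (2 * (2 ^ j - 1)) * v (j + 1) ^ (-a)) := ENNReal.tsum_mul_left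
    _ ≤ ENNReal.ofReal c0 * ENNReal.ofReal (K * v J ^ (-a)) := by
        gcongr
        exact hsum J ρ hρ0 (by linarith)
    _ = ENNReal.ofReal (c0 * K * v J ^ (-a)) := by
        rw [← ENNReal.ofReal_mul hc0p.le, mul_assoc]
    _ ≤ _ := by
        refine ENNReal.ofReal_le_ofReal ?_
        have h1 : wh ω ρ ≤ v J := wh_anti hω (hmem J).1 (by linarith)
        have := Real.rpow_le_rpow_of_nonpos (hpos ρ ⟨hρ0, hρ1⟩) h1 (show -a ≤ 0 by linarith)
        gcongr

theorem stmt_6 (n : ℕ) (hn : 1 ≤ n) (q q' : ℝ) (hq : 1 < q) (hq' : 1/q + 1/q' = 1)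
    (ω : ℝ → ℝ) (hω : IsWeight ω) (hD : DD ω)
    (hpos : ∀ r ∈ Set.Ico (0:ℝ) 1, 0 < wh ω r)
    (B : En n → En n → ℂ) (hB : IsRepKernel n ω B) :
    ∃ C : ℝ, 0 < C ∧ ∀ z ∈ Bl n,
      (∫⁻ ξ in Bl n,
          ENNReal.ofReal (‖B z ξ‖ * ((wh ω ‖ξ‖) ^ (-(1/(q*q')))) ^ q' * ω ‖ξ‖) ∂(nV n))
        ≤ ENNReal.ofReal (C * ((wh ω ‖z‖) ^ (-(1/(q*q')))) ^ q') := by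
  have hq0 : 0 < q := by linarith
  have ha : 0 < 1 / q := by positivity
  have ha1 : 1 / q < 1 := by rw [div_lt_one hq0]; exact hq
  have hq'0 : q' ≠ 0 := by
    rintro rfl
    rw [div_zero, add_zero] at hq'
    linarith
  have hrw : ∀ {z : En n}, z ∈ Bl n →
      ((wh ω ‖z‖) ^ (-(1/(q*q')))) ^ q' = wh ω ‖z‖ ^ (-(1 / q)) := by
    intro z hz
    have h1 : ‖z‖ < 1 := by simpa [Bl] using hz
    rw [← Real.rpow_mul (hpos ‖z‖ ⟨norm_nonneg _, h1⟩).le]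
    congr 1
    field_simp
  obtain ⟨C, hC1, hC⟩ := hD.1
  obtain ⟨K, hK, hsum⟩ := weight_sum n hω hD hpos ha
  have hv := vb_pos n
  have hexp : 0 < 1 / (1 / q) - 1 := by rw [one_div_one_div]; linarith
  set E : ℝ := 320 * (2 + (n + 2 * C)) * (vb n * 17 ^ (n - 1) * C ^ 6)
        * (1 + (1 / (1 / q) - 1)⁻¹) with hE
  have hE0 : 0 < E := by positivity
  refine ⟨(vb n)⁻¹ * (E * K), by positivity, fun z hz => ?_⟩
  have hz1 : ‖z‖ < 1 := by simpa [Bl] using hz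
  have hvol : (volume (ball (0 : En n) 1))⁻¹ = ENNReal.ofReal (vb n)⁻¹ := by
    rw [ENNReal.ofReal_inv_of_pos hv, vb, ENNReal.ofReal_toReal measure_ball_lt_top.ne]
  rw [hrw hz]
  calc _ = ∫⁻ ξ in Bl n, ENNReal.ofReal (‖B z ξ‖ * wh ω ‖ξ‖ ^ (-(1 / q)) * ω ‖ξ‖) ∂(nV n) := by
        refine setLIntegral_congr_fun (Bl_meas n) fun ξ hξ => ?_
        rw [hrw hξ]
    _ ≤ _ := kernel_int hn hω hpos hC1 hC ha ha1 hB hz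
    _ = ENNReal.ofReal (vb n)⁻¹ * (ENNReal.ofReal E * ∑' j : ℕ, ENNReal.ofReal
        (‖z‖ ^ (2 * (2 ^ j - 1)) * mom ω (2 * (2 ^ j - 1) + 2 * n - 1) ^ (-(1 / q)))) := by
        rw [hvol]
        congr 1
        rw [← ENNReal.tsum_mul_left]
        simp_rw [← ENNReal.ofReal_mul hE0.le]
        rfl
    _ ≤ ENNReal.ofReal (vb n)⁻¹ * (ENNReal.ofReal E *
        ENNReal.ofReal (K * wh ω ‖z‖ ^ (-(1 / q)))) := by
        gcongr
        exact hsum ‖z‖ (norm_nonneg _) hz1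
    _ = _ := by
        rw [← ENNReal.ofReal_mul hE0.le, ← ENNReal.ofReal_mul (by positivity)]
        congr 1
        ring
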